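/- On the event E, assume Condition (H) with the dataset in the sparse-unlearnable regime and Γ ≥ Cd, and run adversarial distillation under a Good Teacher for a horizon T satisfying T_0 + m^{2/3}·log(T_max)/(η α²) ≤ T ≤ T_max, where T_max := N/(1000·η·mP·σ_0⁴σ_n⁶d³·log²(16NmP/δ)). Then: (1) there exists a filter r ∈ [m] with w_{r,1}^{(T)} ≥ C_0/(α m^{1/3}); (2) every noise response remains at initialization scale: |⟨w_r^{(T)}, x_{i,j}⟩| ≤ 4σ_0σ_n√(d·log(16NmP/δ)) for all r ∈ [m], i ∈ [N], j ≠ s(X_i); (3) the robust training error is o(1); and (4) the robust test error on the learnable test distribution satisfies L^rob(f_{W^{(T)}}) = o(1). -/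

import Mathlib

open Finset MeasureTheory ProbabilityTheory
open scoped ENNReal NNReal

noncomputable section

namespace AD

/-- Cubic ReLU activation. -/
def phi (z : ℝ) : ℝ := (max 0 z) ^ 3

/-- Negative sigmoid `ψ(z) = 1/(1+e^z)`. -/
def psi (z : ℝ) : ℝ := 1 / (1 + Real.exp z)

/-- Logistic loss `ℓ(z) = log(1+e^{-z})`. -/
def lloss (z : ℝ) : ℝ := Real.log (1 + Real.exp (-z))

/-- Logistic sigmoid `σ(z) = 1/(1+e^{-z})`. -/
def sigm (z : ℝ) : ℝ := 1 / (1 + Real.exp (-z))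

/-- Euclidean inner product on `Fin d → ℝ`. -/
def dot {d : ℕ} (a b : Fin d → ℝ) : ℝ := ∑ k, a k * b k

/-- Squared Euclidean norm. -/
def sqnorm {d : ℕ} (a : Fin d → ℝ) : ℝ := dot a a

/-- First standard basis vector `e₁` (the learnable feature `u`). -/
def e1 (d : ℕ) (hd : 0 < d) : Fin d → ℝ := fun k => if k = (⟨0, hd⟩ : Fin d) then 1 else 0

/-- Last standard basis vector `e_d` (the unlearnable feature `v`). -/
def eLast (d : ℕ) (_hd : 0 < d) : Fin d → ℝ := fun k => if (k : ℕ) = d - 1 then 1 else 0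

/-- The two-layer student network
`f_W(X) = ∑_r ∑_p [φ(⟨w_r,x_p⟩) − φ(−⟨w_r,x_p⟩)]`. -/
def netOut {m P d : ℕ} (w : Fin m → Fin d → ℝ) (X : Fin P → Fin d → ℝ) : ℝ :=
  ∑ r, ∑ p, (phi (dot (w r) (X p)) - phi (-(dot (w r) (X p))))

/-- The concentration event `E` of the paper, i.e. properties (P1)–(P8), stated for
training patches `x`, initialization `w0`, labels `y` and signal-patch indices `sig`. -/
def EventEOn (N m P d : ℕ) (hd : 0 < d) (sigman sigma0 delta : ℝ)
    (y : Fin N → ℝ) (sig : Fin N → Fin P)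
    (x : Fin N → Fin P → Fin d → ℝ) (w0 : Fin m → Fin d → ℝ) : Prop :=
  -- (P1) noise-patch norms
  (∀ i j, j ≠ sig i →
      sigman ^ 2 * d / 2 ≤ sqnorm (x i j) ∧ sqnorm (x i j) ≤ 3 * sigman ^ 2 * d / 2) ∧
  -- (P2) pairwise noise inner products
  (∀ i k j q, j ≠ sig i → q ≠ sig k → ((i, j) : Fin N × Fin P) ≠ (k, q) →
      |dot (x i j) (x k q)| ≤
        2 * sigman ^ 2 * Real.sqrt ((d : ℝ) * Real.log ((16 : ℝ) * N ^ 2 * P ^ 2 / delta))) ∧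
  -- (P3) sup-norm of noise patches
  (∀ i j, j ≠ sig i → ∀ kk : Fin d,
      |x i j kk| ≤ sigman * Real.sqrt (2 * Real.log ((16 : ℝ) * d * N * P / delta))) ∧
  -- (P4) initialization norms
  (∀ r, Real.sqrt (sqnorm (w0 r)) ≤ 2 * sigma0 * Real.sqrt d) ∧
  -- (P5) initialization signal correlation
  (∀ r, |dot (w0 r) (e1 d hd)| ≤ sigma0 * Real.sqrt (2 * Real.log ((16 : ℝ) * m / delta))) ∧
  -- (P6) initialization noise correlations
  (∀ r i j, j ≠ sig i →
      |dot (w0 r) (x i j)| ≤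
        2 * sigma0 * sigman * Real.sqrt ((d : ℝ) * Real.log ((16 : ℝ) * N * m * P / delta))) ∧
  -- (P7) maximal initial signal alignment
  (∃ r, sigma0 / 2 ≤ dot (w0 r) (e1 d hd)) ∧
  -- (P8) maximal initial noise alignment
  (∀ i j, j ≠ sig i → ∃ r, sigma0 * sigman * Real.sqrt d / 4 ≤ y i * dot (w0 r) (x i j))
structure Setting where
  N : ℕ
  m : ℕ
  P : ℕ
  d : ℕ
  T : ℕ
  hN : 0 < N
  hm : 0 < m
  hP : 0 < P
  hd : 0 < d
  alpha : ℝ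
  sigman : ℝ
  sigma0 : ℝ
  eta : ℝ
  eps : ℝ
  delta : ℝ
  halpha : 0 < alpha
  hsigman : 0 < sigman
  hsigma0 : 0 < sigma0
  heta : 0 < eta
  heps : 0 < eps
  hepsalpha : eps < alpha
  hdelta0 : 0 < delta
  hdelta1 : delta < 1
  /-- labels -/
  y : Fin N → ℝ
  hy : ∀ i, y i = 1 ∨ y i = -1
  /-- signal patch index -/
  sig : Fin N → Fin P
  /-- learnable samples -/
  SL : Finset (Fin N)
  /-- unlearnable samples -/
  SU : Finset (Fin N)
  hunion : SL ∪ SU = Finset.univ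
  hdisj : Disjoint SL SU
  /-- training patches -/
  x : Fin N → Fin P → Fin d → ℝ
  hsigL : ∀ i ∈ SL, x i (sig i) = (alpha * y i) • e1 d hd
  hsigU : ∀ i ∈ SU, x i (sig i) = (alpha * y i) • eLast d hd
  hnoiseU : ∀ i j, j ≠ sig i → dot (x i j) (e1 d hd) = 0
  hnoiseV : ∀ i j, j ≠ sig i → dot (x i j) (eLast d hd) = 0
  /-- weight trajectory -/
  w : ℕ → Fin m → Fin d → ℝ
  hwperp : ∀ t r, dot (w t r) (eLast d hd) = 0
  /-- adversarial training examples at each iteration -/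
  xadv : ℕ → Fin N → Fin P → Fin d → ℝ
  hadvnoise : ∀ t i j, j ≠ sig i → xadv t i j = x i j
  hadvspan : ∀ t i, ∃ c : ℝ, xadv t i (sig i) - x i (sig i) = c • x i (sig i)
  hadvlinf : ∀ t i p k, |xadv t i p k - x i p k| ≤ eps
  hadvlearn : ∀ t : ℕ, ∀ i ∈ SL,
    alpha - eps ≤ y i * dot (xadv t i (sig i)) (e1 d hd) ∧
      y i * dot (xadv t i (sig i)) (e1 d hd) ≤ alpha

namespace Setting

variable (S : Setting)

/-- Adversarial margin `y_i f_{W^{(t)}}(X̃_i^{(t)})`. -/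
def marg (t : ℕ) (i : Fin S.N) : ℝ := S.y i * netOut (S.w t) (S.xadv t i)

/-- Signal coordinate `w_{r,1}^{(t)}`. -/
def wsig (t : ℕ) (r : Fin S.m) : ℝ := S.w t r ⟨0, S.hd⟩

/-- Unlearnable fraction `p_un = |S_U|/N`. -/
def pun : ℝ := (S.SU.card : ℝ) / S.N

/-- The adversarial-training gradient-descent dynamics. -/
def ATDyn : Prop :=
  ∀ t r, S.w (t + 1) r = S.w t r +
    (3 * S.eta / S.N) •
      ∑ i : Fin S.N, (psi (S.marg t i) * S.y i) •
        ∑ p : Fin S.P, (dot (S.w t r) (S.xadv t i p)) ^ 2 • S.xadv t i p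

/-- The signed gradient weight of sample `i` at iteration `t` under adversarial
distillation from teacher logits `fT`. -/
def gAD (fT : Fin S.N → ℝ) (t : ℕ) (i : Fin S.N) : ℝ :=
  sigm (S.y i * fT i) * psi (S.marg t i) - sigm (-(S.y i * fT i)) * psi (-(S.marg t i))

/-- The adversarial-distillation gradient-descent dynamics. -/
def ADDyn (fT : Fin S.N → ℝ) : Prop :=
  ∀ t r, S.w (t + 1) r = S.w t r +
    (3 * S.eta / S.N) •
      ∑ i : Fin S.N, (S.gAD fT t i * S.y i) •
        ∑ p : Fin S.P, (dot (S.w t r) (S.xadv t i p)) ^ 2 • S.xadv t i p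

/-- Noise coefficients `ρ_{i,j,r}^{(t)}` (adversarial training). -/
def rho (i : Fin S.N) (j : Fin S.P) (r : Fin S.m) : ℕ → ℝ
  | 0 => 0
  | t + 1 => rho i j r t + (3 * S.eta / S.N) * psi (S.marg t i) * (dot (S.w t r) (S.x i j)) ^ 2

/-- Noise coefficients under adversarial distillation. -/
def rhoAD (fT : Fin S.N → ℝ) (i : Fin S.N) (j : Fin S.P) (r : Fin S.m) : ℕ → ℝ
  | 0 => 0
  | t + 1 => rhoAD fT i j r t + (3 * S.eta / S.N) * S.gAD fT t i * (dot (S.w t r) (S.x i j)) ^ 2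

/-- The event `E` for a setting. -/
def EventE : Prop :=
  EventEOn S.N S.m S.P S.d S.hd S.sigman S.sigma0 S.delta S.y S.sig S.x (S.w 0)

/-- Condition (H): the parameter requirements of Condition 4.1 of the paper
(without the unlearnable-fraction regime item, which is imposed separately). -/
def CondH (C : ℝ) : Prop :=
  1 ≤ C ∧
  -- training horizon
  C * S.N / (S.eta * S.sigma0 * S.sigman ^ 3 * ((S.d : ℝ) * Real.sqrt S.d)) ≤ (S.T : ℝ) ∧
  -- dimension
  C * S.m ^ 2 * S.P ^ 2 * S.N ^ 2 *
      (Real.log ((S.T : ℝ) * S.N * S.m * S.P / S.delta)) ^ 4 ≤ (S.d : ℝ) ∧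
  -- signal strength
  C * S.sigman * Real.sqrt S.d * Real.log ((S.T : ℝ) * S.N * S.m * S.P / S.delta) /
      (((S.N : ℝ) * (1 - S.pun)) ^ ((1 : ℝ) / 3)) ≤ S.alpha ∧
  -- initialization scale
  S.sigma0 ≤
    C⁻¹ *
        min (min (1 / ((S.m : ℝ) ^ ((2 : ℝ) / 3) * (S.P : ℝ) ^ ((2 : ℝ) / 3) *
            S.sigman * Real.sqrt S.d))
          (1 / (S.alpha * (S.m : ℝ) ^ ((2 : ℝ) / 3))))
          (1 / (S.sigman * S.m ^ 2 * Real.sqrt S.P * S.d)) /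
      Real.log ((S.T : ℝ) * S.d * S.N * S.m * S.P / S.delta) ∧
  -- learning rate
  S.eta ≤
    C⁻¹ * min (min (1 / (S.alpha ^ 3 * S.sigma0)) (1 / (S.sigman ^ 2 * S.d))) (1 / S.alpha ^ 2) /
      Real.log ((S.T : ℝ) * S.N * S.m * S.P / S.delta) ∧
  -- adversarial budget
  C * S.sigman * S.m * Real.sqrt S.P * Real.log ((S.T : ℝ) * S.d * S.N * S.P / S.delta) ≤ S.eps ∧
  S.eps < C⁻¹ * min S.alpha (1 / (S.m * S.sigma0 * S.d)) ∧
  -- width and number of patches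
  C * Real.log ((S.N : ℝ) * S.P / S.delta) ≤ (S.m : ℝ) ∧
  (S.m : ℝ) ≤ C * Real.log S.d ^ C ∧
  2 ≤ S.P ∧ (S.P : ℝ) ≤ C

/-- The sparse-unlearnable regime of Condition 4.1. -/
def SparseRegime (C : ℝ) : Prop :=
  C / S.N ≤ S.pun ∧ S.pun ≤ C⁻¹ * Real.log S.d / S.N ∧
  C * S.m * S.P * Real.log ((S.T : ℝ) * S.d * S.N * S.m * S.P / S.delta) ≤ (S.N : ℝ)

/-- The noise-stability bound (NS) on learnable samples at iteration `t`. -/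
def NS (t : ℕ) : Prop :=
  ∀ r : Fin S.m, ∀ i ∈ S.SL, ∀ j, j ≠ S.sig i →
    |dot (S.w t r) (S.x i j)| ≤
      3 * S.sigma0 * S.sigman *
          Real.sqrt ((S.d : ℝ) * Real.log ((16 : ℝ) * S.N * S.m * S.P / S.delta)) +
        21 * S.pun * S.N * S.P * Real.log S.T ^ ((1 : ℝ) / 3) / Real.sqrt S.d *
          Real.sqrt (Real.log ((16 : ℝ) * S.N ^ 2 * S.P ^ 2 / S.delta))

/-- The signal-learning hitting time `T₀`. -/
def T0 (C0 : ℝ) : ℕ :=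
  sInf {t : ℕ | ∃ r, C0 / (S.alpha * (S.m : ℝ) ^ ((1 : ℝ) / 3)) < S.wsig t r}

/-- Maximum of the noise coefficients over unlearnable noise patches. -/
def rhoMaxSU (t : ℕ) : ℝ :=
  sSup {z : ℝ | ∃ r : Fin S.m, ∃ k ∈ S.SU, ∃ q, q ≠ S.sig k ∧ z = S.rho k q r t}

/-- Shifted noise coefficients `ρ̂_{i,j,r}^{(t)}`. -/
def rhoHat (i : Fin S.N) (j : Fin S.P) (r : Fin S.m) (t : ℕ) : ℝ :=
  S.rho i j r t + S.y i * dot (S.w 0 r) (S.x i j) / sqnorm (S.x i j)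

/-- Maximum shifted noise coefficient over unlearnable noise patches. -/
def rhoHatMax (t : ℕ) : ℝ :=
  sSup {z : ℝ | ∃ r : Fin S.m, ∃ k ∈ S.SU, ∃ q, q ≠ S.sig k ∧ z = S.rhoHat k q r t}

/-- The noise-memorization hitting time `T₁`. -/
def T1 (C1 : ℝ) : ℕ :=
  sInf {t : ℕ | C1 / (((S.m : ℝ) * S.P) ^ ((1 : ℝ) / 3) * S.sigman ^ 2 * S.d) < S.rhoHatMax t}

/-- The Good-Teacher horizon `T_max`. -/
def Tmax : ℝ :=
  S.N / (1000 * S.eta * S.m * S.P * S.sigma0 ^ 4 * S.sigman ^ 6 * (S.d : ℝ) ^ 3 *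
    Real.log ((16 : ℝ) * S.N * S.m * S.P / S.delta) ^ 2)

end Setting
/-- Law of the label: uniform on `{+1, −1}`. -/
def labelLaw : Measure ℝ :=
  ((2 : ℝ≥0∞)⁻¹ • Measure.dirac (1 : ℝ)) + ((2 : ℝ≥0∞)⁻¹ • Measure.dirac (-1 : ℝ))

/-- Law of a single coordinate of a noise patch: `N(0, σ_n²)` off the feature
subspace coordinates, `δ₀` on coordinates `1` and `d`. -/
def noiseCoordLaw (sigman : ℝ) (d : ℕ) (k : Fin d) : Measure ℝ :=
  if (k : ℕ) = 0 ∨ (k : ℕ) = d - 1 then Measure.dirac 0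
  else gaussianReal 0 ⟨sigman ^ 2, sq_nonneg _⟩

/-- Law of a noise patch: `N(0, σ_n²(I_d − Π_F))`. -/
def noisePatchLaw (sigman : ℝ) (d : ℕ) : Measure (Fin d → ℝ) :=
  Measure.pi (noiseCoordLaw sigman d)

/-- Uniform law of the signal-patch index. -/
def uniformPatch (P : ℕ) (hP : 0 < P) : Measure (Fin P) :=
  (@PMF.uniformOfFintype (Fin P) _ ⟨⟨0, hP⟩⟩).toMeasure

/-- The learnable test distribution `D_L`: uniform label, uniform signal-patch index,
signal patch `α y u`, independent Gaussian noise patches. -/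
def testLaw (alpha sigman : ℝ) (P d : ℕ) (hP : 0 < P) (hd : 0 < d) :
    Measure ((Fin P → Fin d → ℝ) × ℝ) :=
  Measure.map
    (fun z : ℝ × Fin P × (Fin P → Fin d → ℝ) =>
      (Function.update z.2.2 z.2.1 ((alpha * z.1) • e1 d hd), z.1))
    ((labelLaw).prod ((uniformPatch P hP).prod (Measure.pi fun _ : Fin P => noisePatchLaw sigman d)))

/-- Robust test error of the student at iteration `t` on the learnable test
distribution `D_L`. -/
def Setting.robErr (S : Setting) (t : ℕ) : ℝ≥0∞ :=
  testLaw S.alpha S.sigman S.P S.d S.hP S.hd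
    {Xy : (Fin S.P → Fin S.d → ℝ) × ℝ |
      ∃ Δ : Fin S.P → Fin S.d → ℝ, (∀ p k, |Δ p k| ≤ S.eps) ∧
        Xy.2 * netOut (S.w t) (fun p => Xy.1 p + Δ p) < 0}

/-! ### Elementary facts on the logistic functions and the network -/

lemma phi_sub_phi_neg (z : ℝ) : phi z - phi (-z) = z ^ 3 := by
  unfold phi
  rcases le_total 0 z with h | h
  · rw [max_eq_right h, max_eq_left (by linarith)]; ring
  · rw [max_eq_left h, max_eq_right (by linarith)]; ring

lemma netOut_eq {m P d : ℕ} (w : Fin m → Fin d → ℝ) (X : Fin P → Fin d → ℝ) :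
    netOut w X = ∑ r, ∑ p, dot (w r) (X p) ^ 3 := by
  simp only [netOut, phi_sub_phi_neg]

lemma psi_pos (z : ℝ) : 0 < psi z := by unfold psi; positivity

lemma psi_le_exp_neg (z : ℝ) : psi z ≤ Real.exp (-z) := by
  unfold psi
  rw [Real.exp_neg, one_div]
  exact inv_anti₀ (Real.exp_pos z) (by linarith)

lemma half_exp_neg_le_psi {z c : ℝ} (hz : z ≤ c) (hc : 0 ≤ c) : Real.exp (-c) / 2 ≤ psi z := by
  unfold psi
  have h1 : Real.exp z ≤ Real.exp c := Real.exp_le_exp.2 hz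
  have h2 : 1 ≤ Real.exp c := Real.one_le_exp hc
  rw [Real.exp_neg, ← one_div, div_div]
  exact one_div_le_one_div_of_le (by positivity) (by linarith)

lemma sigm_eq (z : ℝ) : sigm z = 1 - psi z := by
  unfold sigm psi
  rw [Real.exp_neg]
  have := Real.exp_pos z
  field_simp
  ring

lemma psi_neg (z : ℝ) : psi (-z) = 1 - psi z := by
  rw [← sigm_eq]; rfl

lemma psi_zero : psi 0 = 1 / 2 := by norm_num [psi]

lemma half_sub_psi_le {z : ℝ} (hz : 0 ≤ z) : 1 / 2 - psi z ≤ z / 2 := by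
  unfold psi
  have h1 : 1 - z ≤ Real.exp (-z) := by linarith [Real.add_one_le_exp (-z)]
  have h2 : Real.exp (-z) * Real.exp z = 1 := by rw [← Real.exp_add]; simp
  have h3 := Real.exp_pos z
  rw [div_sub_div _ _ (by norm_num) (by positivity), div_le_div_iff₀ (by positivity) (by norm_num)]
  nlinarith

lemma abs_psi_sub_half_le (z : ℝ) : |psi z - 1 / 2| ≤ |z| / 2 := by
  have key : ∀ z : ℝ, 0 ≤ z → |psi z - 1 / 2| ≤ z / 2 := by
    intro z hz
    have h1 : psi z ≤ 1 / 2 := by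
      unfold psi
      exact one_div_le_one_div_of_le (by norm_num) (by linarith [Real.one_le_exp hz])
    rw [abs_sub_comm, abs_of_nonneg (by linarith)]
    exact half_sub_psi_le hz
  rcases le_total 0 z with h | h
  · rw [abs_of_nonneg h]; exact key z h
  · rw [abs_of_nonpos h]
    have := key (-z) (by linarith)
    rw [psi_neg] at this
    rwa [abs_sub_comm, show 1 / 2 - psi z = 1 - psi z - 1 / 2 by ring]

lemma lloss_le_exp_neg (z : ℝ) : lloss z ≤ Real.exp (-z) := by
  unfold lloss
  have := Real.log_le_sub_one_of_pos (show 0 < 1 + Real.exp (-z) by positivity)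
  linarith

/-! ### The scalar signal recursion `a ↦ a + H a²` -/

lemma abs_cube_le_of_neg_le {x a : ℝ} (hx : -a ≤ x) (ha : 0 ≤ a) :
    |x| ^ 3 ≤ x ^ 3 + 2 * a ^ 3 := by
  rcases le_total 0 x with h | h
  · rw [abs_of_nonneg h]; nlinarith [pow_nonneg ha 3]
  · rw [abs_of_nonpos h]
    have : (-x) ^ 3 ≤ a ^ 3 := pow_le_pow_left₀ (by linarith) (by linarith) 3
    nlinarith

lemma sum_abs_cube_le {m : ℕ} {A : Fin m → ℝ} {a : ℝ} (ha : 0 ≤ a) (hma : m * a ^ 3 ≤ 1 / 100)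
    (hA : ∀ r, -a ≤ A r) : ∑ r, |A r| ^ 3 ≤ ∑ r, A r ^ 3 + 1 / 50 := by
  have h := Finset.sum_le_sum fun r (_ : r ∈ Finset.univ) => abs_cube_le_of_neg_le (hA r) ha
  simp only [Finset.sum_add_distrib, Finset.sum_const, Finset.card_univ, Fintype.card_fin,
    nsmul_eq_mul] at h
  linarith

lemma abs_le_sum_cube {m : ℕ} {A : Fin m → ℝ} {a : ℝ} (ha : 0 ≤ a) (hma : m * a ^ 3 ≤ 1 / 100)
    (hA : ∀ r, -a ≤ A r) (r : Fin m) : |A r| ≤ ∑ r, A r ^ 3 + 51 / 50 := by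
  have h := sum_abs_cube_le ha hma hA
  have h1 : |A r| ^ 3 ≤ ∑ r, |A r| ^ 3 :=
    Finset.single_le_sum (f := fun r => |A r| ^ 3) (fun _ _ => by positivity) (Finset.mem_univ r)
  have h2 : |A r| ≤ |A r| ^ 3 + 1 := by
    have := abs_nonneg (A r)
    nlinarith [mul_nonneg this (sq_nonneg (|A r| - 1)), sq_nonneg (|A r| - 1)]
  linarith

/-- One step of the recursion: the relative increment is small and the total cubic signal grows
by at most a multiple of `h (F + 1)² e^{-9F/10}`. -/
lemma signal_step {m : ℕ} {A A' : Fin m → ℝ} {a h H F : ℝ} (ha : 0 ≤ a)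
    (hma : m * a ^ 3 ≤ 1 / 100) (hA : ∀ r, -a ≤ A r) (hF : F = ∑ r, A r ^ 3)
    (hstep : ∀ r, A' r = A r + H * A r ^ 2) (hh0 : 0 ≤ h) (hh : h ≤ 1 / 500) (hH0 : 0 ≤ H)
    (hHup : H ≤ 4 * h * Real.exp (-(9 / 10 * F))) :
    (∀ r, |H * A r| ≤ 1 / 10) ∧
      Real.exp ((∑ r, A' r ^ 3) / 2) ≤ Real.exp (F / 2) + 600 * h := by
  have habs := sum_abs_cube_le ha hma hA
  have hsingle := abs_le_sum_cube ha hma hA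
  rw [← hF] at habs hsingle
  have hFlow : -(1 / 50) ≤ F := by
    have : 0 ≤ ∑ r, |A r| ^ 3 := Finset.sum_nonneg fun _ _ => by positivity
    linarith
  have he9 : Real.exp (-(9 / 10 * F)) * Real.exp (9 / 10 * F) = 1 := by
    rw [← Real.exp_add]; simp
  have hb9 : 0 < Real.exp (-(9 / 10 * F)) := Real.exp_pos _
  have hrel : ∀ r, |H * A r| ≤ 1 / 10 := by
    intro r
    rw [abs_mul, abs_of_nonneg hH0]
    have h1 := Real.add_one_le_exp (9 / 10 * F)
    have h2 : |A r| ≤ 12 / 10 * Real.exp (9 / 10 * F) := by linarith [hsingle r]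
    calc H * |A r| ≤ (4 * h * Real.exp (-(9 / 10 * F))) * (12 / 10 * Real.exp (9 / 10 * F)) :=
          mul_le_mul hHup h2 (abs_nonneg _) (by positivity)
      _ = 48 / 10 * h * (Real.exp (-(9 / 10 * F)) * Real.exp (9 / 10 * F)) := by ring
      _ ≤ 1 / 10 := by rw [he9]; linarith
  refine ⟨hrel, ?_⟩
  have hcube : ∀ r, A' r ^ 3 ≤ A r ^ 3 + 4 * H * ((F + 51 / 50) * |A r| ^ 3) := by
    intro r
    have h1 := abs_le.1 (hrel r)
    have h2 : A' r ^ 3 = A r ^ 3 + H * A r ^ 4 * (3 + 3 * (H * A r) + (H * A r) ^ 2) := by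
      rw [hstep]; ring
    have h3 : 3 + 3 * (H * A r) + (H * A r) ^ 2 ≤ 4 := by nlinarith
    have h4 : A r ^ 4 ≤ (F + 51 / 50) * |A r| ^ 3 := by
      have : A r ^ 4 = |A r| * |A r| ^ 3 := by
        rw [← pow_succ', (show Even 4 by decide).pow_abs]
      rw [this]
      exact mul_le_mul_of_nonneg_right (hsingle r) (by positivity)
    have h5 : 0 ≤ H * A r ^ 4 := by positivity
    rw [h2]
    nlinarith [mul_le_mul_of_nonneg_left h3 h5, mul_le_mul_of_nonneg_left h4 hH0]
  have hinc : ∑ r, A' r ^ 3 ≤ F + 16 * h * Real.exp (-(9 / 10 * F)) * (F + 51 / 50) ^ 2 := by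
    have h1 := Finset.sum_le_sum fun r (_ : r ∈ Finset.univ) => hcube r
    rw [Finset.sum_add_distrib, ← Finset.mul_sum, ← Finset.mul_sum, ← hF] at h1
    have h2 : (F + 51 / 50) * ∑ r, |A r| ^ 3 ≤ (F + 51 / 50) ^ 2 := by
      rw [sq]; exact mul_le_mul_of_nonneg_left (by linarith) (by linarith)
    have h3 : 4 * H * ((F + 51 / 50) * ∑ r, |A r| ^ 3) ≤
        4 * (4 * h * Real.exp (-(9 / 10 * F))) * (F + 51 / 50) ^ 2 :=
      mul_le_mul (by linarith) h2
        (mul_nonneg (by linarith) (Finset.sum_nonneg fun _ _ => by positivity)) (by positivity)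
    linarith
  set D := 16 * h * Real.exp (-(9 / 10 * F)) * (F + 51 / 50) ^ 2 with hD
  have hD0 : 0 ≤ D := by positivity
  have hsq : ∀ c : ℝ, 1 / 5 ≤ c → c ≤ 45 / 100 →
      (F + 51 / 50) ^ 2 ≤ 27 * Real.exp (2 * c * F) := by
    intro c hc1 hc2
    have h1 := Real.add_one_le_exp (c * F)
    have h2 : Real.exp (2 * c * F) = Real.exp (c * F) ^ 2 := by
      rw [← Real.exp_nat_mul]; congr 1; push_cast; ring
    have h3 : F + 51 / 50 ≤ 51 / 10 * Real.exp (c * F) := by nlinarith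
    rw [h2]
    calc (F + 51 / 50) ^ 2 ≤ (51 / 10 * Real.exp (c * F)) ^ 2 :=
          pow_le_pow_left₀ (by linarith) h3 2
      _ ≤ 27 * Real.exp (c * F) ^ 2 := by nlinarith [sq_nonneg (Real.exp (c * F))]
  have hDexp : Real.exp (F / 2) * D ≤ 432 * h := by
    have h1 := hsq (1 / 5) (by norm_num) (by norm_num)
    have h2 : Real.exp (F / 2) * Real.exp (-(9 / 10 * F)) * Real.exp (2 * (1 / 5) * F) = 1 := by
      rw [← Real.exp_add, ← Real.exp_add, Real.exp_eq_one_iff]; ring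
    calc Real.exp (F / 2) * D
        = 16 * h * (Real.exp (F / 2) * Real.exp (-(9 / 10 * F))) * (F + 51 / 50) ^ 2 := by
          rw [hD]; ring
      _ ≤ 16 * h * (Real.exp (F / 2) * Real.exp (-(9 / 10 * F))) *
            (27 * Real.exp (2 * (1 / 5) * F)) := by gcongr
      _ = 432 * h * (Real.exp (F / 2) * Real.exp (-(9 / 10 * F)) *
            Real.exp (2 * (1 / 5) * F)) := by ring
      _ = 432 * h := by rw [h2, mul_one]
  have hD1 : D ≤ 1 := by
    have h1 := hsq (45 / 100) (by norm_num) (by norm_num)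
    rw [show 2 * (45 / 100) * F = 9 / 10 * F by ring] at h1
    calc D ≤ 16 * h * Real.exp (-(9 / 10 * F)) * (27 * Real.exp (9 / 10 * F)) := by
          rw [hD]; gcongr
      _ = 432 * h * (Real.exp (-(9 / 10 * F)) * Real.exp (9 / 10 * F)) := by ring
      _ ≤ 1 := by rw [he9]; linarith
  have hexp : Real.exp (D / 2) ≤ 1 + D := by
    have h1 := Real.abs_exp_sub_one_sub_id_le (x := D / 2) (by rw [abs_of_nonneg] <;> linarith)
    have h2 := (abs_le.1 h1).2
    nlinarith
  calc Real.exp ((∑ r, A' r ^ 3) / 2) ≤ Real.exp (F / 2 + D / 2) :=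
        Real.exp_le_exp.2 (by linarith)
    _ = Real.exp (F / 2) * Real.exp (D / 2) := Real.exp_add _ _
    _ ≤ Real.exp (F / 2) * (1 + D) := by gcongr
    _ ≤ Real.exp (F / 2) + 600 * h := by linarith

/-- A trajectory of the cubic signal recursion over `n` steps, with step sizes `H` controlled
from above and (while `e^{F/2} ≤ U`) from below through the total cubic signal
`F s = ∑ r, A s r ^ 3`. -/
structure SignalPath {m : ℕ} (A : ℕ → Fin m → ℝ) (H : ℕ → ℝ) (n : ℕ) (a h U : ℝ) : Prop where
  a_nonneg : 0 ≤ a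
  a_small : m * a ^ 3 ≤ 1 / 100
  init : ∀ r, |A 0 r| ≤ a
  step : ∀ s < n, ∀ r, A (s + 1) r = A s r + H s * A s r ^ 2
  h_pos : 0 < h
  h_small : h ≤ 1 / 500
  horizon : 2 + 600 * h * n ≤ U
  upper : ∀ s < n, -(1 / 50) ≤ ∑ r, A s r ^ 3 →
    H s ≤ 4 * h * Real.exp (-(9 / 10 * ∑ r, A s r ^ 3))
  lower : ∀ s < n, -(1 / 50) ≤ ∑ r, A s r ^ 3 → Real.exp ((∑ r, A s r ^ 3) / 2) ≤ U →
    h / 2 * Real.exp (-max (∑ r, A s r ^ 3) 0) ≤ H s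

namespace SignalPath

variable {m : ℕ} {A : ℕ → Fin m → ℝ} {H : ℕ → ℝ} {n : ℕ} {a h U : ℝ}

lemma sum_ge (hp : SignalPath A H n a h U) {s : ℕ} (hs : ∀ r, -a ≤ A s r) :
    -(1 / 50) ≤ ∑ r, A s r ^ 3 := by
  have h1 := sum_abs_cube_le hp.a_nonneg hp.a_small hs
  have : 0 ≤ ∑ r, |A s r| ^ 3 := Finset.sum_nonneg fun _ _ => by positivity
  linarith

lemma invariant (hp : SignalPath A H n a h U) : ∀ s ≤ n,
    (∀ r, -a ≤ A s r) ∧ Real.exp ((∑ r, A s r ^ 3) / 2) ≤ 2 + 600 * h * s := by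
  have hU : ∀ s ≤ n, 2 + 600 * h * s ≤ U := fun s hs => by
    have : (s : ℝ) ≤ n := by exact_mod_cast hs
    nlinarith [hp.horizon, hp.h_pos]
  intro s
  induction s with
  | zero =>
    intro _
    refine ⟨fun r => (abs_le.1 (hp.init r)).1, ?_⟩
    have h1 : ∑ r, A 0 r ^ 3 ≤ 1 / 100 := by
      have : ∑ r, A 0 r ^ 3 ≤ ∑ _r : Fin m, a ^ 3 := Finset.sum_le_sum fun r _ => by
        have h2 : A 0 r ^ 3 ≤ |A 0 r| ^ 3 := by
          rw [← abs_pow]; exact le_abs_self _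
        exact h2.trans (pow_le_pow_left₀ (abs_nonneg _) (hp.init r) 3)
      simp only [Finset.sum_const, Finset.card_univ, Fintype.card_fin, nsmul_eq_mul] at this
      linarith [hp.a_small]
    have h3 : Real.exp ((∑ r, A 0 r ^ 3) / 2) ≤ Real.exp (1 / 2) :=
      Real.exp_le_exp.2 (by linarith)
    have h4 := (abs_le.1 (Real.abs_exp_sub_one_sub_id_le (x := 1 / 2) (by norm_num [abs_le]))).2
    push_cast
    linarith
  | succ s ih =>
    intro hs
    obtain ⟨hlow, hexp⟩ := ih (by omega)
    have hsum := hp.sum_ge hlow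
    have hH : 0 ≤ H s := le_trans (by have := hp.h_pos; positivity)
      (hp.lower s (by omega) hsum (hexp.trans (hU s (by omega))))
    have hstep := signal_step hp.a_nonneg hp.a_small hlow rfl (hp.step s (by omega)) hp.h_pos.le
      hp.h_small hH (hp.upper s (by omega) hsum)
    refine ⟨fun r => ?_, ?_⟩
    · rw [hp.step s (by omega)]
      have := hlow r
      nlinarith [mul_nonneg hH (sq_nonneg (A s r))]
    · refine hstep.2.trans ?_
      push_cast
      linarith

lemma neg_le (hp : SignalPath A H n a h U) {s : ℕ} (hs : s ≤ n) (r : Fin m) : -a ≤ A s r :=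
  (hp.invariant s hs).1 r

lemma exp_half_le (hp : SignalPath A H n a h U) {s : ℕ} (hs : s ≤ n) :
    Real.exp ((∑ r, A s r ^ 3) / 2) ≤ 2 + 600 * h * n := by
  have : (s : ℝ) ≤ n := by exact_mod_cast hs
  nlinarith [(hp.invariant s hs).2, hp.h_pos]

lemma le_stepSize (hp : SignalPath A H n a h U) {s : ℕ} (hs : s < n) :
    h / 2 * Real.exp (-max (∑ r, A s r ^ 3) 0) ≤ H s :=
  hp.lower s hs (hp.sum_ge (hp.neg_le hs.le)) ((hp.exp_half_le hs.le).trans hp.horizon)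

lemma stepSize_nonneg (hp : SignalPath A H n a h U) {s : ℕ} (hs : s < n) : 0 ≤ H s :=
  le_trans (by have := hp.h_pos; positivity) (hp.le_stepSize hs)

lemma abs_stepSize_mul_le (hp : SignalPath A H n a h U) {s : ℕ} (hs : s < n) (r : Fin m) :
    |H s * A s r| ≤ 1 / 10 :=
  (signal_step hp.a_nonneg hp.a_small (hp.neg_le hs.le) rfl (hp.step s hs) hp.h_pos.le
    hp.h_small (hp.stepSize_nonneg hs) (hp.upper s hs (hp.sum_ge (hp.neg_le hs.le)))).1 r

lemma mono (hp : SignalPath A H n a h U) (r : Fin m) {s t : ℕ} (hst : s ≤ t) (ht : t ≤ n) :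
    A s r ≤ A t r := by
  induction t, hst using Nat.le_induction with
  | base => exact le_rfl
  | succ t _ ih =>
    refine (ih (by omega)).trans ?_
    rw [hp.step t (by omega)]
    nlinarith [mul_nonneg (hp.stepSize_nonneg (show t < n by omega)) (sq_nonneg (A t r))]

lemma sum_mono (hp : SignalPath A H n a h U) {s t : ℕ} (hst : s ≤ t) (ht : t ≤ n) :
    ∑ r, A s r ^ 3 ≤ ∑ r, A t r ^ 3 :=
  Finset.sum_le_sum fun r _ => (show Odd 3 by decide).strictMono_pow.monotone (hp.mono r hst ht)

/-- The step sizes after a time when some filter exceeds `c > 0` sum to at most `1.1 / c`. -/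
lemma sum_stepSize_le (hp : SignalPath A H n a h U) {c : ℝ} (hc : 0 < c) {s : ℕ} (r : Fin m)
    (hr : c ≤ A s r) : ∑ k ∈ Finset.Ico s n, H k ≤ 11 / 10 / c := by
  rcases le_or_gt n s with hns | hsn
  · rw [Finset.Ico_eq_empty_of_le hns, Finset.sum_empty]; positivity
  have key : ∀ t, s ≤ t → t ≤ n →
      ∑ k ∈ Finset.Ico s t, H k ≤ 11 / 10 * (1 / A s r - 1 / A t r) := by
    intro t hst
    induction t, hst using Nat.le_induction with
    | base => intro _; simp
    | succ t hst ih =>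
      intro ht
      rw [Finset.sum_Ico_succ_top hst]
      have hA : 0 < A t r := hc.trans_le (hr.trans (hp.mono r hst (by omega)))
      have hH := hp.stepSize_nonneg (show t < n by omega)
      have hrel := (abs_le.1 (hp.abs_stepSize_mul_le (show t < n by omega) r)).2
      have hrel0 : 0 ≤ H t * A t r := by positivity
      have h1 : H t ≤ 11 / 10 * (1 / A t r - 1 / A (t + 1) r) := by
        have h2 : A (t + 1) r = A t r * (1 + H t * A t r) := by
          rw [hp.step t (by omega)]; ring
        have h3 : 1 / A t r - 1 / A (t + 1) r = H t / (1 + H t * A t r) := by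
          rw [h2]; field_simp; ring
        rw [h3, mul_div_assoc', le_div_iff₀ (by positivity)]
        nlinarith
      linarith [ih (by omega)]
  have hn : 0 < A n r := hc.trans_le (hr.trans (hp.mono r hsn.le le_rfl))
  have h1 : 1 / A s r ≤ 1 / c := one_div_le_one_div_of_le hc hr
  have h2 : 0 < 1 / A n r := by positivity
  calc _ ≤ 11 / 10 * (1 / A s r - 1 / A n r) := key n hsn.le le_rfl
    _ ≤ 11 / 10 * (1 / c) := by linarith
    _ = 11 / 10 / c := by ring

lemma exists_filter_ge (F : Fin m → ℝ) {μ : ℝ} (hμm : μ ^ 3 = m)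
    (hF : 1 ≤ ∑ r, F r ^ 3) : ∃ r, 1 / μ ≤ F r := by
  by_contra! hcon
  have hm : 0 < m := by
    rcases Nat.eq_zero_or_pos m with h | h
    · subst h; norm_num at hF
    · exact h
  have h1 : ∑ r, F r ^ 3 < ∑ _r : Fin m, (1 / μ) ^ 3 := by
    refine Finset.sum_lt_sum_of_nonempty ⟨⟨0, hm⟩, Finset.mem_univ _⟩ fun r _ => ?_
    exact (show Odd 3 by decide).strictMono_pow (hcon r)
  simp only [Finset.sum_const, Finset.card_univ, Fintype.card_fin, nsmul_eq_mul] at h1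
  rw [div_pow, one_pow, hμm, mul_one_div_cancel (by positivity)] at h1
  linarith

/-- Total size of weights `G` that exceed the step sizes by a factor `4 e^{F/16}` at most. -/
lemma sum_weights_le (hp : SignalPath A H n a h U) {c μ V : ℝ} (hc : 0 < c) (r : Fin m)
    (hr : c ≤ A 0 r) (hμ : 0 < μ) (hμm : μ ^ 3 = m) (G : ℕ → ℝ)
    (hG : ∀ s < n, G s ≤ 4 * H s * Real.exp (max (∑ r, A s r ^ 3) 0 / 16))
    (hV0 : 0 ≤ V)
    (hV : ∀ s < n, Real.exp (max (∑ r, A s r ^ 3) 0 / 16) ≤ V) :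
    ∑ s ∈ Finset.range n, G s ≤ 5 / c + 5 * V * μ := by
  have hsplit : ∀ s ∈ Finset.range n, G s ≤
      45 / 10 * H s + 4 * V * (if 1 ≤ ∑ r, A s r ^ 3 then H s else 0) := by
    intro s hs
    have hs := Finset.mem_range.1 hs
    have hH := hp.stepSize_nonneg hs
    refine (hG s hs).trans ?_
    split_ifs with h1
    · nlinarith [mul_le_mul_of_nonneg_left (hV s hs) hH]
    · have h2 : max (∑ r, A s r ^ 3) 0 / 16 ≤ 1 / 16 := by
        have : max (∑ r, A s r ^ 3) 0 ≤ 1 := max_le (by linarith) (by norm_num)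
        linarith
      have h3 := Real.exp_le_exp.2 h2
      have h4 := (abs_le.1 (Real.abs_exp_sub_one_sub_id_le (x := 1 / 16)
        (by norm_num [abs_le]))).2
      nlinarith
  have hfirst : ∑ s ∈ Finset.range n, H s ≤ 11 / 10 / c := by
    rw [Finset.range_eq_Ico]; exact hp.sum_stepSize_le hc r hr
  have hsecond : ∑ s ∈ Finset.range n, (if 1 ≤ ∑ r, A s r ^ 3 then H s else 0) ≤
      11 / 10 * μ := by
    rw [← Finset.sum_filter]
    by_cases hex : ∃ s, s < n ∧ 1 ≤ ∑ r, A s r ^ 3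
    · classical
      obtain ⟨hτn, hτ⟩ := Nat.find_spec hex
      set τ := Nat.find hex
      obtain ⟨r', hr'⟩ := exists_filter_ge (A τ) hμm hτ
      have h1 := hp.sum_stepSize_le (by positivity) r' hr'
      have h2 : ∑ s ∈ (Finset.range n).filter (fun s => 1 ≤ ∑ r, A s r ^ 3), H s ≤
          ∑ s ∈ Finset.Ico τ n, H s := by
        refine Finset.sum_le_sum_of_subset_of_nonneg ?_ ?_
        · intro s hs
          rw [Finset.mem_filter, Finset.mem_range] at hs
          exact Finset.mem_Ico.2 ⟨Nat.find_min' hex hs, hs.1⟩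
        · intro s hs _
          exact hp.stepSize_nonneg (Finset.mem_Ico.1 hs).2
      rw [div_div_eq_mul_div, div_one] at h1
      exact h2.trans h1
    · rw [Finset.filter_false_of_mem, Finset.sum_empty]
      · positivity
      · intro s hs h1
        exact hex ⟨s, Finset.mem_range.1 hs, h1⟩
  have h1 := Finset.sum_le_sum hsplit
  rw [Finset.sum_add_distrib, ← Finset.mul_sum, ← Finset.mul_sum] at h1
  have h2 : 45 / 10 * (11 / 10 / c) ≤ 5 / c := by
    rw [show 45 / 10 * (11 / 10 / c) = (495 / 100) / c by ring]
    gcongr; norm_num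
  have h3 := mul_le_mul_of_nonneg_left hsecond (show 0 ≤ 4 * V by positivity)
  nlinarith [mul_nonneg hV0 hμ.le]

/-- After sufficiently many steps the total cubic signal exceeds `K`. -/
lemma le_sum_of_long (hp : SignalPath A H n a h U) {c K : ℝ} (hc : 0 < c) (r : Fin m)
    (hr : c ≤ A 0 r) (hK : 0 ≤ K) (hlong : 22 / 10 * Real.exp K < h * n * c) :
    K ≤ ∑ r, A n r ^ 3 := by
  by_contra! hcon
  have h1 : ∀ s ∈ Finset.Ico 0 n, h / 2 * Real.exp (-K) ≤ H s := by
    intro s hs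
    have hs := (Finset.mem_Ico.1 hs).2
    refine le_trans ?_ (hp.le_stepSize hs)
    have := hp.h_pos
    have h2 : max (∑ r, A s r ^ 3) 0 ≤ K := max_le ((hp.sum_mono hs.le le_rfl).trans hcon.le) hK
    gcongr
  have h2 := (Finset.sum_le_sum h1).trans (hp.sum_stepSize_le hc r hr)
  simp only [Finset.sum_const, Nat.card_Ico, nsmul_eq_mul, Nat.sub_zero] at h2
  rw [le_div_iff₀ hc, Real.exp_neg] at h2
  have h3 := Real.exp_pos K
  have h4 : n * (h / 2 * (Real.exp K)⁻¹) * c * Real.exp K = h * n * c / 2 := by field_simp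
  nlinarith [mul_le_mul_of_nonneg_right h2 h3.le]

end SignalPath

/-! ### Algebra of the inner product -/

section Dot

variable {d : ℕ}

lemma dot_comm (a b : Fin d → ℝ) : dot a b = dot b a := by
  simp only [dot, mul_comm]

lemma dot_add_left (a b c : Fin d → ℝ) : dot (a + b) c = dot a c + dot b c := by
  simp only [dot, Pi.add_apply, add_mul, Finset.sum_add_distrib]

lemma dot_add_right (a b c : Fin d → ℝ) : dot a (b + c) = dot a b + dot a c := by
  simp only [dot_comm a, dot_add_left]

lemma dot_smul_left (s : ℝ) (a b : Fin d → ℝ) : dot (s • a) b = s * dot a b := by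
  simp only [dot, Pi.smul_apply, smul_eq_mul, Finset.mul_sum, mul_assoc]

lemma dot_smul_right (s : ℝ) (a b : Fin d → ℝ) : dot a (s • b) = s * dot a b := by
  rw [dot_comm, dot_smul_left, dot_comm]

lemma dot_sum_left {ι : Type*} (s : Finset ι) (f : ι → Fin d → ℝ) (b : Fin d → ℝ) :
    dot (∑ i ∈ s, f i) b = ∑ i ∈ s, dot (f i) b := by
  simp only [dot, Finset.sum_apply, Finset.sum_mul]
  exact Finset.sum_comm

lemma dot_e1 (hd : 0 < d) (a : Fin d → ℝ) : dot a (e1 d hd) = a ⟨0, hd⟩ := by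
  simp [dot, e1]

lemma dot_single (a : Fin d → ℝ) (k : Fin d) : dot a (Pi.single k 1) = a k := by
  simp [dot, Pi.single_apply]

lemma sum_abs_le_sqrt_mul (a : Fin d → ℝ) : ∑ k, |a k| ≤ Real.sqrt (d * sqnorm a) := by
  refine Real.le_sqrt_of_sq_le ?_
  have h := sq_sum_le_card_mul_sum_sq (s := (Finset.univ : Finset (Fin d))) (f := fun k => |a k|)
  simpa [sqnorm, dot, sq] using h

end Dot

namespace Setting

variable (S : Setting)

/-! ### The dynamics in the signal direction and orthogonally to it -/

lemma y_sq (i : Fin S.N) : S.y i * S.y i = 1 := by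
  rcases S.hy i with h | h <;> rw [h] <;> norm_num

lemma abs_y (i : Fin S.N) : |S.y i| = 1 := by
  rcases S.hy i with h | h <;> rw [h] <;> norm_num

lemma mem_SL_or_SU (i : Fin S.N) : i ∈ S.SL ∨ i ∈ S.SU := by
  rw [← Finset.mem_union, S.hunion]; exact Finset.mem_univ i

/-- Relative amplitude of the perturbed signal patch along the learnable feature. -/
def advAmp (t : ℕ) (i : Fin S.N) : ℝ :=
  S.y i * dot (S.xadv t i (S.sig i)) (e1 S.d S.hd) / S.alpha

/-- Signal alignment `α w_{r,1}`. -/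
def align (t : ℕ) (r : Fin S.m) : ℝ := S.alpha * S.wsig t r

/-- Effective step size of the signal recursion. -/
def signalStep (fT : Fin S.N → ℝ) (t : ℕ) : ℝ :=
  3 * (S.eta * S.alpha ^ 2) / S.N * ∑ i ∈ S.SL, S.gAD fT t i * S.advAmp t i ^ 3

/-- Contribution of the noise patches to the margin. -/
def noiseMarg (t : ℕ) (i : Fin S.N) : ℝ :=
  S.y i * ∑ r, ∑ p ∈ Finset.univ.erase (S.sig i), dot (S.w t r) (S.x i p) ^ 3

lemma gAD_eq (fT : Fin S.N → ℝ) (t : ℕ) (i : Fin S.N) :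
    S.gAD fT t i = psi (S.marg t i) - psi (S.y i * fT i) := by
  unfold gAD
  rw [sigm_eq, sigm_eq, psi_neg, psi_neg]
  ring

lemma exists_xadv_eq_smul (t : ℕ) (i : Fin S.N) :
    ∃ c : ℝ, S.xadv t i (S.sig i) = c • S.x i (S.sig i) := by
  obtain ⟨c, hc⟩ := S.hadvspan t i
  refine ⟨1 + c, ?_⟩
  rw [add_smul, one_smul, ← hc]
  abel

lemma xadv_sig_of_mem_SL (t : ℕ) {i : Fin S.N} (hi : i ∈ S.SL) :
    S.xadv t i (S.sig i) = (S.alpha * S.advAmp t i * S.y i) • e1 S.d S.hd := by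
  obtain ⟨c, hc⟩ := S.exists_xadv_eq_smul t i
  have hα := S.halpha.ne'
  have h1 : dot (e1 S.d S.hd) (e1 S.d S.hd) = 1 := by rw [dot_e1]; simp [e1]
  unfold advAmp
  rw [hc, S.hsigL i hi, smul_smul, dot_smul_left, h1]
  congr 1
  field_simp
  linear_combination (-(c * S.y i)) * S.y_sq i

lemma dot_w_xadv_sig_of_mem_SU (t : ℕ) (r : Fin S.m) {i : Fin S.N} (hi : i ∈ S.SU) :
    dot (S.w t r) (S.xadv t i (S.sig i)) = 0 := by
  obtain ⟨c, hc⟩ := S.exists_xadv_eq_smul t i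
  rw [hc, S.hsigU i hi, dot_smul_right, dot_smul_right, S.hwperp]
  ring

lemma dot_w_xadv_sig_of_mem_SL (t : ℕ) (r : Fin S.m) {i : Fin S.N} (hi : i ∈ S.SL) :
    dot (S.w t r) (S.xadv t i (S.sig i)) = S.advAmp t i * S.y i * S.align t r := by
  rw [S.xadv_sig_of_mem_SL t hi, dot_smul_right, dot_e1]
  unfold align wsig
  ring

lemma sum_patch_eq (i : Fin S.N) (f : Fin S.P → ℝ) :
    ∑ p, f p = f (S.sig i) + ∑ p ∈ Finset.univ.erase (S.sig i), f p :=
  (Finset.add_sum_erase _ _ (Finset.mem_univ _)).symm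

lemma marg_eq (t : ℕ) (i : Fin S.N) :
    S.marg t i = S.y i * ∑ r, dot (S.w t r) (S.xadv t i (S.sig i)) ^ 3 + S.noiseMarg t i := by
  unfold marg noiseMarg
  rw [netOut_eq, ← mul_add, ← Finset.sum_add_distrib]
  congr 1
  refine Finset.sum_congr rfl fun r _ => ?_
  rw [S.sum_patch_eq i]
  congr 1
  refine Finset.sum_congr rfl fun p hp => ?_
  rw [S.hadvnoise t i p (Finset.ne_of_mem_erase hp)]

lemma marg_of_mem_SU (t : ℕ) {i : Fin S.N} (hi : i ∈ S.SU) :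
    S.marg t i = S.noiseMarg t i := by
  rw [S.marg_eq]
  simp [S.dot_w_xadv_sig_of_mem_SU t _ hi]

lemma marg_of_mem_SL (t : ℕ) {i : Fin S.N} (hi : i ∈ S.SL) :
    S.marg t i = S.advAmp t i ^ 3 * ∑ r, S.align t r ^ 3 + S.noiseMarg t i := by
  rw [S.marg_eq]
  congr 1
  rw [Finset.mul_sum, Finset.mul_sum]
  refine Finset.sum_congr rfl fun r _ => ?_
  rw [S.dot_w_xadv_sig_of_mem_SL t r hi]
  have h4 : S.y i ^ 4 = 1 := by
    rw [show S.y i ^ 4 = (S.y i * S.y i) ^ 2 by ring, S.y_sq]; norm_num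
  linear_combination (S.advAmp t i ^ 3 * S.align t r ^ 3) * h4

lemma abs_noiseMarg_le {t : ℕ} {i : Fin S.N} {β : ℝ} (hβ : 0 ≤ β)
    (h : ∀ r j, j ≠ S.sig i → |dot (S.w t r) (S.x i j)| ≤ β) :
    |S.noiseMarg t i| ≤ S.m * S.P * β ^ 3 := by
  unfold noiseMarg
  rw [abs_mul, S.abs_y, one_mul]
  have hin : ∀ r, |∑ p ∈ Finset.univ.erase (S.sig i), dot (S.w t r) (S.x i p) ^ 3| ≤
      S.P * β ^ 3 := by
    intro r
    calc _ ≤ ∑ p ∈ Finset.univ.erase (S.sig i), |dot (S.w t r) (S.x i p) ^ 3| :=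
          Finset.abs_sum_le_sum_abs _ _
      _ ≤ ∑ p ∈ Finset.univ.erase (S.sig i), β ^ 3 := Finset.sum_le_sum fun p hp => by
          rw [abs_pow]
          exact pow_le_pow_left₀ (abs_nonneg _) (h r p (Finset.ne_of_mem_erase hp)) 3
      _ ≤ ∑ _p : Fin S.P, β ^ 3 :=
          Finset.sum_le_sum_of_subset_of_nonneg (Finset.erase_subset _ _)
            fun _ _ _ => by positivity
      _ = S.P * β ^ 3 := by simp
  calc _ ≤ ∑ r, |∑ p ∈ Finset.univ.erase (S.sig i), dot (S.w t r) (S.x i p) ^ 3| :=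
        Finset.abs_sum_le_sum_abs _ _
    _ ≤ ∑ _r : Fin S.m, S.P * β ^ 3 := Finset.sum_le_sum fun r _ => hin r
    _ = S.m * S.P * β ^ 3 := by simp [mul_assoc]

variable {S} {fT : Fin S.N → ℝ}

lemma dot_w_succ (hdyn : S.ADDyn fT) (t : ℕ) (r : Fin S.m) (z : Fin S.d → ℝ) :
    dot (S.w (t + 1) r) z = dot (S.w t r) z + 3 * S.eta / S.N * ∑ i, S.gAD fT t i * S.y i *
      ∑ p, dot (S.w t r) (S.xadv t i p) ^ 2 * dot (S.xadv t i p) z := by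
  rw [hdyn t r, dot_add_left, dot_smul_left, dot_sum_left]
  simp only [dot_smul_left, dot_sum_left]

lemma align_succ (hdyn : S.ADDyn fT) (t : ℕ) (r : Fin S.m) :
    S.align (t + 1) r = S.align t r + S.signalStep fT t * S.align t r ^ 2 := by
  have h := dot_w_succ hdyn t r (e1 S.d S.hd)
  rw [dot_e1, dot_e1] at h
  have hsum : ∑ i, S.gAD fT t i * S.y i *
      ∑ p, dot (S.w t r) (S.xadv t i p) ^ 2 * dot (S.xadv t i p) (e1 S.d S.hd) =
      S.alpha * S.align t r ^ 2 * ∑ i ∈ S.SL, S.gAD fT t i * S.advAmp t i ^ 3 := by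
    have hpatch : ∀ i, ∑ p, dot (S.w t r) (S.xadv t i p) ^ 2 *
        dot (S.xadv t i p) (e1 S.d S.hd) = dot (S.w t r) (S.xadv t i (S.sig i)) ^ 2 *
          dot (S.xadv t i (S.sig i)) (e1 S.d S.hd) := by
      intro i
      rw [S.sum_patch_eq i, Finset.sum_eq_zero, add_zero]
      intro p hp
      have hp := Finset.ne_of_mem_erase hp
      rw [S.hadvnoise t i p hp, S.hnoiseU i p hp, mul_zero]
    simp only [hpatch]
    rw [← S.hunion, Finset.sum_union S.hdisj, Finset.mul_sum]
    have hU : ∑ i ∈ S.SU, S.gAD fT t i * S.y i * (dot (S.w t r) (S.xadv t i (S.sig i)) ^ 2 *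
        dot (S.xadv t i (S.sig i)) (e1 S.d S.hd)) = 0 := by
      refine Finset.sum_eq_zero fun i hi => ?_
      rw [S.dot_w_xadv_sig_of_mem_SU t r hi]
      ring
    rw [hU, add_zero]
    refine Finset.sum_congr rfl fun i hi => ?_
    have h1 : dot (S.xadv t i (S.sig i)) (e1 S.d S.hd) = S.alpha * S.advAmp t i * S.y i := by
      rw [S.xadv_sig_of_mem_SL t hi, dot_smul_left, dot_e1]; simp [e1]
    rw [S.dot_w_xadv_sig_of_mem_SL t r hi, h1]
    have h4 : S.y i ^ 4 = 1 := by
      rw [show S.y i ^ 4 = (S.y i * S.y i) ^ 2 by ring, S.y_sq]; norm_num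
    linear_combination (S.gAD fT t i * S.advAmp t i ^ 3 * S.align t r ^ 2 * S.alpha) * h4
  rw [hsum] at h
  unfold signalStep
  have h2 : ∀ t, S.align t r = S.alpha * S.w t r ⟨0, S.hd⟩ := fun _ => rfl
  rw [h2 (t + 1), h]
  rw [h2 t]
  ring

lemma dot_w_succ_of_perp (hdyn : S.ADDyn fT) (t : ℕ) (r : Fin S.m) {z : Fin S.d → ℝ}
    (hz : dot (e1 S.d S.hd) z = 0) :
    dot (S.w (t + 1) r) z = dot (S.w t r) z + 3 * S.eta / S.N * ∑ i, S.gAD fT t i * S.y i *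
      ∑ p ∈ Finset.univ.erase (S.sig i), dot (S.w t r) (S.x i p) ^ 2 * dot (S.x i p) z := by
  rw [dot_w_succ hdyn]
  congr 2
  refine Finset.sum_congr rfl fun i _ => ?_
  rw [S.sum_patch_eq i]
  have h0 : dot (S.w t r) (S.xadv t i (S.sig i)) ^ 2 * dot (S.xadv t i (S.sig i)) z = 0 := by
    rcases S.mem_SL_or_SU i with hi | hi
    · rw [S.xadv_sig_of_mem_SL t hi, dot_smul_left, hz]; ring
    · rw [S.dot_w_xadv_sig_of_mem_SU t r hi]; ring
  rw [h0, zero_add]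
  congr 1
  refine Finset.sum_congr rfl fun p hp => ?_
  rw [S.hadvnoise t i p (Finset.ne_of_mem_erase hp)]

/-- Drift of the weights in a direction orthogonal to the learnable feature, in terms of the
accumulated gradient weights of the samples. -/
lemma abs_dot_w_sub_le (hdyn : S.ADDyn fT) (n : ℕ) (r : Fin S.m) {z : Fin S.d → ℝ}
    (hz : dot (e1 S.d S.hd) z = 0) {β Q : ℝ}
    (hβ : ∀ t < n, ∀ i j, j ≠ S.sig i → |dot (S.w t r) (S.x i j)| ≤ β)
    (hQ : ∀ i, ∑ t ∈ Finset.range n, S.eta * |S.gAD fT t i| ≤ Q) :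
    |dot (S.w n r) z - dot (S.w 0 r) z| ≤ 3 * β ^ 2 * Q / S.N *
      ∑ i, ∑ p ∈ Finset.univ.erase (S.sig i), |dot (S.x i p) z| := by
  have hN : (0 : ℝ) < S.N := by exact_mod_cast S.hN
  have hη := S.heta
  set W : Fin S.N → ℝ := fun i => ∑ p ∈ Finset.univ.erase (S.sig i), |dot (S.x i p) z| with hW
  have hstep : ∀ t < n, |dot (S.w (t + 1) r) z - dot (S.w t r) z| ≤
      3 * β ^ 2 / S.N * ∑ i, (S.eta * |S.gAD fT t i|) * W i := by
    intro t ht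
    rw [dot_w_succ_of_perp hdyn t r hz, add_sub_cancel_left, abs_mul,
      abs_of_nonneg (by positivity)]
    have hin : ∀ i, |S.gAD fT t i * S.y i *
        ∑ p ∈ Finset.univ.erase (S.sig i), dot (S.w t r) (S.x i p) ^ 2 * dot (S.x i p) z| ≤
        |S.gAD fT t i| * (β ^ 2 * W i) := by
      intro i
      rw [abs_mul, abs_mul, S.abs_y, mul_one]
      refine mul_le_mul_of_nonneg_left ?_ (abs_nonneg _)
      rw [hW, Finset.mul_sum]
      refine (Finset.abs_sum_le_sum_abs _ _).trans (Finset.sum_le_sum fun p hp => ?_)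
      rw [abs_mul, abs_of_nonneg (sq_nonneg _), ← sq_abs]
      exact mul_le_mul_of_nonneg_right (pow_le_pow_left₀ (abs_nonneg _)
        (hβ t ht i p (Finset.ne_of_mem_erase hp)) 2) (abs_nonneg _)
    calc _ ≤ 3 * S.eta / S.N * ∑ i, |S.gAD fT t i| * (β ^ 2 * W i) := by
          gcongr
          exact (Finset.abs_sum_le_sum_abs _ _).trans (Finset.sum_le_sum fun i _ => hin i)
      _ = _ := by
          rw [Finset.mul_sum, Finset.mul_sum]
          exact Finset.sum_congr rfl fun i _ => by ring
  have htel : |dot (S.w n r) z - dot (S.w 0 r) z| ≤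
      ∑ t ∈ Finset.range n, 3 * β ^ 2 / S.N * ∑ i, (S.eta * |S.gAD fT t i|) * W i := by
    rw [← Finset.sum_range_sub (fun t => dot (S.w t r) z)]
    exact (Finset.abs_sum_le_sum_abs _ _).trans
      (Finset.sum_le_sum fun t ht => hstep t (Finset.mem_range.1 ht))
  refine htel.trans ?_
  rw [← Finset.mul_sum, Finset.sum_comm]
  have hW0 : ∀ i, 0 ≤ W i := fun i => Finset.sum_nonneg fun _ _ => abs_nonneg _
  calc 3 * β ^ 2 / S.N * ∑ i, ∑ t ∈ Finset.range n, (S.eta * |S.gAD fT t i|) * W i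
      ≤ 3 * β ^ 2 / S.N * ∑ i, Q * W i := by
        gcongr with i _
        rw [← Finset.sum_mul]
        exact mul_le_mul_of_nonneg_right (hQ i) (hW0 i)
    _ = 3 * β ^ 2 * Q / S.N * ∑ i, W i := by
        rw [← Finset.mul_sum]; ring

/-! ### Quantitative consequences of the parameter constraints -/

/-- The scale `σ₀ σ_n √(d log(16NmP/δ))` of the initial noise responses. -/
def noiseScale (S : Setting) : ℝ :=
  S.sigma0 * S.sigman * Real.sqrt ((S.d : ℝ) * Real.log ((16 : ℝ) * S.N * S.m * S.P / S.delta))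

/-- Accumulated gradient weight of a sample that keeps all noise responses at initialization
scale. -/
def weightBudget (S : Setting) : ℝ := S.N / (42 * S.noiseScale * S.sigman ^ 2 * S.d)

/-- Bound on the initial signal alignments. -/
def alignInit (S : Setting) : ℝ :=
  S.alpha * (S.sigma0 * Real.sqrt (2 * Real.log ((16 : ℝ) * S.m / S.delta)))

/-- The consequences of the parameter constraints that the analysis of the dynamics uses. -/
structure Regular (S : Setting) (C : ℝ) : Prop where
  C_ge : 10 ^ 6 ≤ C
  noiseScale_pos : 0 < S.noiseScale
  card_SU_le : C * S.SU.card ≤ S.N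
  eps_le : C * S.eps ≤ S.alpha
  rate_le : C * (S.eta * S.alpha ^ 2) ≤ 1
  response_le : 27 * S.m * S.P * S.noiseScale ^ 3 ≤ 1 / 100
  alignInit_le : S.m * S.alignInit ^ 3 ≤ 1 / 100
  cross_le : S.N * S.P *
    Real.sqrt ((S.d : ℝ) * Real.log ((16 : ℝ) * S.N ^ 2 * S.P ^ 2 / S.delta)) ≤ S.d / 40
  drift_le : S.N * S.P *
    Real.sqrt ((S.d : ℝ) * Real.log ((16 : ℝ) * S.N * S.m * S.P / S.delta)) ≤ S.d / 2
  learn_budget : ∀ V : ℝ, 0 ≤ V → V ^ 8 ≤ 2 + 600 * (S.eta * S.alpha ^ 2) * S.T →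
    10 / (S.alpha * S.sigma0) + 5 * V * (S.m : ℝ) ^ ((1 : ℝ) / 3) ≤
      S.alpha ^ 2 * S.weightBudget
  unlearn_budget : S.T * (S.eta * (27 / 2 * S.m * S.P * S.noiseScale ^ 3)) ≤ S.weightBudget
  horizon_ge : C ≤ S.eta * S.alpha ^ 2 * S.T * (S.alpha * S.sigma0)
  teacher_ge : 12 * (2 + 600 * (S.eta * S.alpha ^ 2) * S.T) ^ 2 ≤ Real.exp (C * S.d)
  eps_sigma0_le : C * (S.m * (S.eps * (3 * S.sigma0 * S.d))) ≤ 3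
  patches_le : (S.P : ℝ) ≤ C
  test_le : C * (S.m * S.P * (3 * S.sigma0 * S.d * S.sigman)) ≤ 6

variable {C Γ : ℝ}

lemma Regular.advAmp_le (_hR : S.Regular C) {t : ℕ} {i : Fin S.N} (hi : i ∈ S.SL) :
    S.advAmp t i ≤ 1 := by
  unfold advAmp
  rw [div_le_one S.halpha]
  exact (S.hadvlearn t i hi).2

lemma Regular.le_advAmp_cube (hR : S.Regular C) {t : ℕ} {i : Fin S.N} (hi : i ∈ S.SL) :
    15 / 16 + 1 / 100 ≤ S.advAmp t i ^ 3 := by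
  have hα := S.halpha
  have h1 : 1 - 1 / 100 ≤ S.advAmp t i := by
    unfold advAmp
    rw [le_div_iff₀ S.halpha]
    have := (S.hadvlearn t i hi).1
    have h2 := hR.eps_le
    have h3 := hR.C_ge
    have h4 := S.heps
    nlinarith
  have := pow_le_pow_left₀ (by norm_num) h1 3
  refine le_trans (by norm_num) this

/-- The noise responses at time `t` are at most `3/2` of their initial bound. -/
def Quiet (S : Setting) (t : ℕ) : Prop :=
  ∀ r i j, j ≠ S.sig i → |dot (S.w t r) (S.x i j)| ≤ 3 * S.noiseScale

lemma Regular.abs_noiseMarg_le (hR : S.Regular C) {t : ℕ} (hq : S.Quiet t) (i : Fin S.N) :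
    |S.noiseMarg t i| ≤ 27 * S.m * S.P * S.noiseScale ^ 3 := by
  have h := S.abs_noiseMarg_le (i := i) (mul_nonneg (by norm_num) hR.noiseScale_pos.le)
    fun r j hj => hq r i j hj
  refine h.trans (le_of_eq (by ring))

lemma Regular.marg_bounds (hR : S.Regular C) {t : ℕ} (hq : S.Quiet t) {i : Fin S.N}
    (hi : i ∈ S.SL) (hF : -(1 / 50) ≤ ∑ r, S.align t r ^ 3) :
    15 / 16 * max (∑ r, S.align t r ^ 3) 0 - 1 / 25 ≤ S.marg t i ∧
      S.marg t i ≤ max (∑ r, S.align t r ^ 3) 0 + 1 / 100 := by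
  have h1 := abs_le.1 ((hR.abs_noiseMarg_le hq i).trans hR.response_le)
  have h2 := hR.le_advAmp_cube (t := t) hi
  have h3 : S.advAmp t i ^ 3 ≤ 1 := by
    have h4 := hR.advAmp_le (t := t) hi
    by_cases h5 : 0 ≤ S.advAmp t i
    · exact pow_le_one₀ h5 h4
    · have : S.advAmp t i ^ 3 < 0 := (show Odd 3 by decide).pow_neg (by linarith)
      linarith
  rw [S.marg_of_mem_SL t hi]
  set F := ∑ r, S.align t r ^ 3
  rcases le_total 0 F with h | h
  · rw [max_eq_left h]; constructor <;> nlinarith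
  · rw [max_eq_right h]; constructor <;> nlinarith

/-- Upper bound on the gradient weight of a learnable sample. -/
lemma Regular.gAD_le (hR : S.Regular C) {t : ℕ} (hq : S.Quiet t) {i : Fin S.N}
    (hi : i ∈ S.SL) (hF : -(1 / 50) ≤ ∑ r, S.align t r ^ 3) :
    S.gAD fT t i ≤ 5 / 4 * Real.exp (-(15 / 16 * max (∑ r, S.align t r ^ 3) 0)) := by
  have h1 := (hR.marg_bounds hq hi hF).1
  have h2 := psi_pos (S.y i * fT i)
  have h3 : Real.exp (-S.marg t i) ≤
      Real.exp (-(15 / 16 * max (∑ r, S.align t r ^ 3) 0)) * Real.exp (1 / 25) := by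
    rw [← Real.exp_add]; exact Real.exp_le_exp.2 (by linarith)
  have h4 := (abs_le.1 (Real.abs_exp_sub_one_sub_id_le (x := 1 / 25) (by norm_num [abs_le]))).2
  have h5 := Real.exp_pos (-(15 / 16 * max (∑ r, S.align t r ^ 3) 0))
  rw [gAD_eq]
  nlinarith [psi_le_exp_neg (S.marg t i)]

/-- Lower bound on the gradient weight of a learnable sample. -/
lemma Regular.le_gAD (hR : S.Regular C) (hΓ : C * S.d ≤ Γ) {t : ℕ} (hq : S.Quiet t)
    {i : Fin S.N} (hi : i ∈ S.SL) (hT : Γ ≤ S.y i * fT i)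
    (hF : -(1 / 50) ≤ ∑ r, S.align t r ^ 3)
    (hU : Real.exp ((∑ r, S.align t r ^ 3) / 2) ≤ 2 + 600 * (S.eta * S.alpha ^ 2) * S.T) :
    2 / 5 * Real.exp (-max (∑ r, S.align t r ^ 3) 0) ≤ S.gAD fT t i := by
  set F := ∑ r, S.align t r ^ 3
  have h1 := half_exp_neg_le_psi (hR.marg_bounds hq hi hF).2 (by positivity)
  have h2 := psi_le_exp_neg (S.y i * fT i)
  have hη := S.heta
  have hF2 : Real.exp (max F 0) ≤ (2 + 600 * (S.eta * S.alpha ^ 2) * S.T) ^ 2 := by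
    rcases le_total 0 F with h | h
    · rw [max_eq_left h, show F = ((2 : ℕ) : ℝ) * (F / 2) by push_cast; ring, Real.exp_nat_mul]
      exact pow_le_pow_left₀ (Real.exp_pos _).le hU 2
    · rw [max_eq_right h, Real.exp_zero]
      have : 0 ≤ 600 * (S.eta * S.alpha ^ 2) * S.T := by positivity
      nlinarith
  have h3 : 12 * Real.exp (max F 0) ≤ Real.exp (S.y i * fT i) := by
    calc _ ≤ 12 * (2 + 600 * (S.eta * S.alpha ^ 2) * S.T) ^ 2 := by gcongr
      _ ≤ Real.exp (C * S.d) := hR.teacher_ge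
      _ ≤ _ := Real.exp_le_exp.2 (hΓ.trans hT)
  have h4 : Real.exp (-(S.y i * fT i)) ≤ Real.exp (-max F 0) / 12 := by
    rw [Real.exp_neg, Real.exp_neg, inv_eq_one_div, inv_eq_one_div, div_div]
    refine one_div_le_one_div_of_le (by positivity) (by linarith)
  have h5 : Real.exp (-(max F 0 + 1 / 100)) = Real.exp (-max F 0) * Real.exp (-(1 / 100)) := by
    rw [← Real.exp_add]; congr 1; ring
  have h6 := Real.add_one_le_exp (-(1 / 100 : ℝ))
  have h7 := Real.exp_pos (-max F 0)
  rw [gAD_eq]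
  nlinarith

lemma card_SL_add_card_SU (S : Setting) : (S.SL.card : ℝ) + S.SU.card = S.N := by
  have h := Finset.card_union_of_disjoint S.hdisj
  rw [S.hunion, Finset.card_univ, Fintype.card_fin] at h
  exact_mod_cast h.symm

/-- As long as the noise is quiet, the signal alignments follow the cubic recursion. -/
lemma Regular.signalPath (hR : S.Regular C) (hdyn : S.ADDyn fT) (hE : S.EventE)
    (hΓ : C * S.d ≤ Γ) (hT : ∀ i ∈ S.SL, Γ ≤ S.y i * fT i) {n : ℕ} (hn : n ≤ S.T)
    (hq : ∀ t < n, S.Quiet t) :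
    SignalPath S.align (S.signalStep fT) n S.alignInit (S.eta * S.alpha ^ 2)
      (2 + 600 * (S.eta * S.alpha ^ 2) * S.T) := by
  have hα := S.halpha
  have hη := S.heta
  have hN : (0 : ℝ) < S.N := by exact_mod_cast S.hN
  have hh : 0 < S.eta * S.alpha ^ 2 := by positivity
  have hC := hR.C_ge
  have hcard := S.card_SL_add_card_SU
  have hSL1 : (S.SL.card : ℝ) ≤ S.N := by
    have : (0 : ℝ) ≤ S.SU.card := by positivity
    linarith
  have hSL2 : 9 / 10 * (S.N : ℝ) ≤ S.SL.card := by
    have h1 := hR.card_SU_le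
    have : (0 : ℝ) ≤ S.SU.card := by positivity
    nlinarith
  obtain ⟨-, -, -, -, h5, -, -, -⟩ := hE
  refine ⟨?_, hR.alignInit_le, ?_, fun s _ r => align_succ hdyn s r, hh, ?_, ?_, ?_, ?_⟩
  · have := S.hsigma0
    unfold alignInit; positivity
  · intro r
    have h := h5 r
    rw [dot_e1] at h
    unfold align wsig alignInit
    rw [abs_mul, abs_of_pos hα]
    gcongr
  · nlinarith [hR.rate_le]
  · have : (n : ℝ) ≤ S.T := by exact_mod_cast hn
    gcongr
  · intro s hs hF
    set F := ∑ r, S.align s r ^ 3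
    have hterm : ∀ i ∈ S.SL, S.gAD fT s i * S.advAmp s i ^ 3 ≤
        5 / 4 * Real.exp (-(15 / 16 * max F 0)) := by
      intro i hi
      have h1 := hR.gAD_le (fT := fT) (hq s hs) hi hF
      have h2 := hR.le_advAmp_cube (t := s) hi
      have h3 : S.advAmp s i ^ 3 ≤ 1 := by
        refine pow_le_one₀ ?_ (hR.advAmp_le hi)
        by_contra! h4
        have : S.advAmp s i ^ 3 < 0 := (show Odd 3 by decide).pow_neg h4
        linarith
      have h4 := Real.exp_pos (-(15 / 16 * max F 0))
      by_cases h5 : 0 ≤ S.gAD fT s i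
      · nlinarith
      · nlinarith
    have hexp : Real.exp (-(15 / 16 * max F 0)) ≤ Real.exp (-(9 / 10 * F)) := by
      refine Real.exp_le_exp.2 ?_
      rcases le_total 0 F with h | h
      · rw [max_eq_left h]; linarith
      · rw [max_eq_right h]; linarith
    have hpos := Real.exp_pos (-(15 / 16 * max F 0))
    unfold signalStep
    calc _ ≤ 3 * (S.eta * S.alpha ^ 2) / S.N *
          (S.SL.card * (5 / 4 * Real.exp (-(15 / 16 * max F 0)))) := by
          gcongr
          rw [← nsmul_eq_mul]
          exact Finset.sum_le_card_nsmul _ _ _ hterm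
      _ ≤ 3 * (S.eta * S.alpha ^ 2) / S.N *
          (S.N * (5 / 4 * Real.exp (-(15 / 16 * max F 0)))) := by gcongr
      _ = 15 / 4 * (S.eta * S.alpha ^ 2) * Real.exp (-(15 / 16 * max F 0)) := by
          field_simp; ring
      _ ≤ _ := by nlinarith [mul_le_mul_of_nonneg_left hexp hh.le, mul_pos hh hpos]
  · intro s hs hF hU
    set F := ∑ r, S.align s r ^ 3
    have hpos := Real.exp_pos (-max F 0)
    have hterm : ∀ i ∈ S.SL, 3 / 8 * Real.exp (-max F 0) * 9 / 10 ≤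
        S.gAD fT s i * S.advAmp s i ^ 3 := by
      intro i hi
      have h1 := hR.le_gAD hΓ (hq s hs) hi (hT i hi) hF hU
      have h2 := hR.le_advAmp_cube (t := s) hi
      nlinarith
    unfold signalStep
    calc S.eta * S.alpha ^ 2 / 2 * Real.exp (-max F 0)
        ≤ 3 * (S.eta * S.alpha ^ 2) / S.N *
          ((9 / 10 * S.N) * (3 / 8 * Real.exp (-max F 0) * 9 / 10)) := by
          have : 3 * (S.eta * S.alpha ^ 2) / S.N *
            ((9 / 10 * S.N) * (3 / 8 * Real.exp (-max F 0) * 9 / 10)) =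
            (3 * 9 / 10 * 3 / 8 * 9 / 10) * ((S.eta * S.alpha ^ 2) * Real.exp (-max F 0)) := by
            field_simp
          rw [this]
          nlinarith [mul_pos hh hpos]
      _ ≤ 3 * (S.eta * S.alpha ^ 2) / S.N *
          (S.SL.card * (3 / 8 * Real.exp (-max F 0) * 9 / 10)) := by gcongr
      _ ≤ _ := by
          gcongr
          rw [← nsmul_eq_mul]
          exact Finset.card_nsmul_le_sum _ _ _ hterm

lemma exists_align_init_ge (hE : S.EventE) : ∃ r, S.alpha * S.sigma0 / 2 ≤ S.align 0 r := by
  obtain ⟨-, -, -, -, -, -, ⟨r, hr⟩, -⟩ := hE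
  refine ⟨r, ?_⟩
  rw [dot_e1] at hr
  unfold align wsig
  nlinarith [S.halpha]

/-- While the noise is quiet, the accumulated gradient weight of every sample stays within
budget. -/
lemma Regular.sum_weight_le (hR : S.Regular C) (hdyn : S.ADDyn fT) (hE : S.EventE)
    (hΓ : C * S.d ≤ Γ) (hT : ∀ i ∈ S.SL, Γ ≤ S.y i * fT i)
    (hT0 : ∀ i ∈ S.SU, S.y i * fT i = 0) {n : ℕ} (hn : n ≤ S.T)
    (hq : ∀ t < n, S.Quiet t) (i : Fin S.N) :
    ∑ t ∈ Finset.range n, S.eta * |S.gAD fT t i| ≤ S.weightBudget := by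
  have hα := S.halpha
  have hη := S.heta
  have hσ := S.hsigma0
  have hm : (0 : ℝ) < S.m := by exact_mod_cast S.hm
  have hh : 0 < S.eta * S.alpha ^ 2 := by positivity
  rcases S.mem_SL_or_SU i with hi | hi
  · have hp := hR.signalPath hdyn hE hΓ hT hn hq
    obtain ⟨r, hr⟩ := exists_align_init_ge hE
    have hμ : 0 < (S.m : ℝ) ^ ((1 : ℝ) / 3) := by positivity
    have hμm : ((S.m : ℝ) ^ ((1 : ℝ) / 3)) ^ 3 = S.m := by
      rw [← Real.rpow_natCast, ← Real.rpow_mul hm.le]; norm_num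
    have hsum : ∀ s < n, -(1 / 50) ≤ ∑ r, S.align s r ^ 3 :=
      fun s hs => hp.sum_ge (hp.neg_le hs.le)
    have hU : ∀ s ≤ n, Real.exp ((∑ r, S.align s r ^ 3) / 2) ≤
        2 + 600 * (S.eta * S.alpha ^ 2) * S.T := fun s hs => (hp.exp_half_le hs).trans hp.horizon
    have hg : ∀ s < n, 0 ≤ S.gAD fT s i := fun s hs => le_trans (by positivity)
      (hR.le_gAD hΓ (hq s hs) hi (hT i hi) (hsum s hs) (hU s hs.le))
    set V := Real.exp (max (∑ r, S.align n r ^ 3) 0 / 16) with hV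
    have hV8 : V ^ 8 ≤ 2 + 600 * (S.eta * S.alpha ^ 2) * S.T := by
      rw [hV, ← Real.exp_nat_mul,
        show ((8 : ℕ) : ℝ) * (max (∑ r, S.align n r ^ 3) 0 / 16) =
          max (∑ r, S.align n r ^ 3) 0 / 2 by push_cast; ring]
      rcases le_total 0 (∑ r, S.align n r ^ 3) with h | h
      · rw [max_eq_left h]; exact hU n le_rfl
      · rw [max_eq_right h, zero_div, Real.exp_zero]
        have : 0 ≤ 600 * (S.eta * S.alpha ^ 2) * S.T := by positivity
        linarith
    have hbound := hp.sum_weights_le (c := S.alpha * S.sigma0 / 2) (by positivity) r hr hμ hμm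
      (fun s => S.eta * S.alpha ^ 2 * S.gAD fT s i) (V := V) ?_ (Real.exp_pos _).le ?_
    · have hlb := hR.learn_budget V (Real.exp_pos _).le hV8
      rw [← mul_le_mul_iff_of_pos_left (show 0 < S.alpha ^ 2 by positivity), Finset.mul_sum]
      refine le_trans (le_of_eq (Finset.sum_congr rfl fun s hs => ?_))
        (hbound.trans (le_trans (le_of_eq ?_) hlb))
      · rw [abs_of_nonneg (hg s (Finset.mem_range.1 hs))]; ring
      · rw [div_div_eq_mul_div]; norm_num
    · intro s hs
      have h1 := hR.gAD_le (fT := fT) (hq s hs) hi (hsum s hs)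
      have h2 := hp.le_stepSize hs
      set F := ∑ r, S.align s r ^ 3
      have h3 : Real.exp (-(15 / 16 * max F 0)) = Real.exp (-max F 0) * Real.exp (max F 0 / 16) := by
        rw [← Real.exp_add]; congr 1; ring
      have h4 := Real.exp_pos (max F 0 / 16)
      have h5 := Real.exp_pos (-max F 0)
      calc S.eta * S.alpha ^ 2 * S.gAD fT s i
          ≤ S.eta * S.alpha ^ 2 * (5 / 4 * (Real.exp (-max F 0) * Real.exp (max F 0 / 16))) := by
            rw [← h3]; gcongr
        _ = 5 / 2 * (S.eta * S.alpha ^ 2 / 2 * Real.exp (-max F 0)) * Real.exp (max F 0 / 16) := by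
            ring
        _ ≤ 4 * (S.eta * S.alpha ^ 2 / 2 * Real.exp (-max F 0)) * Real.exp (max F 0 / 16) := by
            gcongr; norm_num
        _ ≤ 4 * S.signalStep fT s * Real.exp (max F 0 / 16) := by gcongr
    · intro s hs
      have h1 := max_le_max_right 0 (hp.sum_mono hs.le le_rfl)
      exact Real.exp_le_exp.2 (by linarith)
  · refine le_trans ?_ hR.unlearn_budget
    have hB := hR.noiseScale_pos
    have hterm : ∀ t ∈ Finset.range n, S.eta * |S.gAD fT t i| ≤
        S.eta * (27 / 2 * S.m * S.P * S.noiseScale ^ 3) := by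
      intro t ht
      rw [gAD_eq, hT0 i hi, psi_zero, S.marg_of_mem_SU t hi]
      have h1 := abs_psi_sub_half_le (S.noiseMarg t i)
      have h2 := hR.abs_noiseMarg_le (hq t (Finset.mem_range.1 ht)) i
      gcongr
      linarith
    have h := Finset.sum_le_card_nsmul _ _ _ hterm
    rw [Finset.card_range, nsmul_eq_mul] at h
    refine h.trans ?_
    have : (n : ℝ) ≤ S.T := by exact_mod_cast hn
    gcongr

lemma dot_e1_noise (i : Fin S.N) {j : Fin S.P} (hj : j ≠ S.sig i) :
    dot (e1 S.d S.hd) (S.x i j) = 0 := by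
  rw [dot_comm]; exact S.hnoiseU i j hj

lemma Regular.sum_abs_dot_noise_le (hR : S.Regular C) (hE : S.EventE) (k : Fin S.N)
    {q : Fin S.P} (hq : q ≠ S.sig k) :
    ∑ i, ∑ p ∈ Finset.univ.erase (S.sig i), |dot (S.x i p) (S.x k q)| ≤
      14 / 9 * S.sigman ^ 2 * S.d := by
  obtain ⟨h1, h2, -⟩ := hE
  set Lg := Real.sqrt ((S.d : ℝ) * Real.log ((16 : ℝ) * S.N ^ 2 * S.P ^ 2 / S.delta)) with hLg
  have hLg0 : 0 ≤ Lg := Real.sqrt_nonneg _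
  have hσ := S.hsigman
  have hterm : ∀ i, ∀ p ∈ Finset.univ.erase (S.sig i), |dot (S.x i p) (S.x k q)| ≤
      2 * S.sigman ^ 2 * Lg + if ((i, p) : Fin S.N × Fin S.P) = (k, q) then
        3 * S.sigman ^ 2 * S.d / 2 else 0 := by
    intro i p hp
    split_ifs with h
    · obtain ⟨rfl, rfl⟩ := Prod.mk.inj h
      have h3 := h1 i p hq
      have h4 : 0 ≤ sqnorm (S.x i p) := le_trans (by positivity) h3.1
      change |sqnorm (S.x i p)| ≤ _
      rw [abs_of_nonneg h4]
      have : 0 ≤ 2 * S.sigman ^ 2 * Lg := by positivity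
      linarith [h3.2]
    · rw [add_zero]
      exact h2 i k p q (Finset.ne_of_mem_erase hp) hq h
  calc _ ≤ ∑ i, ∑ p ∈ Finset.univ.erase (S.sig i), (2 * S.sigman ^ 2 * Lg +
        if ((i, p) : Fin S.N × Fin S.P) = (k, q) then 3 * S.sigman ^ 2 * S.d / 2 else 0) :=
        Finset.sum_le_sum fun i _ => Finset.sum_le_sum fun p hp => hterm i p hp
    _ ≤ ∑ i, ∑ p, (2 * S.sigman ^ 2 * Lg +
        if ((i, p) : Fin S.N × Fin S.P) = (k, q) then 3 * S.sigman ^ 2 * S.d / 2 else 0) := by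
        refine Finset.sum_le_sum fun i _ => Finset.sum_le_sum_of_subset_of_nonneg
          (Finset.erase_subset _ _) fun p _ _ => ?_
        split_ifs <;> positivity
    _ = S.N * S.P * (2 * S.sigman ^ 2 * Lg) + 3 * S.sigman ^ 2 * S.d / 2 := by
        rw [← Finset.sum_product', Finset.univ_product_univ, Finset.sum_add_distrib]
        simp [mul_assoc]
    _ ≤ _ := by
        have h3 := mul_le_mul_of_nonneg_left hR.cross_le (show 0 ≤ 2 * S.sigman ^ 2 by positivity)
        have h4 : 0 ≤ S.sigman ^ 2 * S.d := by positivity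
        rw [← hLg] at h3
        nlinarith

/-- The noise responses stay at initialization scale up to the horizon. -/
lemma Regular.quiet (hR : S.Regular C) (hdyn : S.ADDyn fT) (hE : S.EventE)
    (hΓ : C * S.d ≤ Γ) (hT : ∀ i ∈ S.SL, Γ ≤ S.y i * fT i)
    (hT0 : ∀ i ∈ S.SU, S.y i * fT i = 0) : ∀ n ≤ S.T, S.Quiet n := by
  intro n
  induction n using Nat.strong_induction_on with
  | _ n ih =>
    intro hn r k q hq
    have hquiet : ∀ t < n, S.Quiet t := fun t ht => ih t ht (by omega)
    have hB := hR.noiseScale_pos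
    have hσ := S.hsigman
    have hN : (0 : ℝ) < S.N := by exact_mod_cast S.hN
    have hd : (0 : ℝ) < S.d := by exact_mod_cast S.hd
    have hQ0 : 0 < S.weightBudget := by unfold weightBudget; positivity
    have h1 := abs_dot_w_sub_le hdyn n r (dot_e1_noise k hq) (fun t ht i j hj => hquiet t ht r i j hj)
      (hR.sum_weight_le hdyn hE hΓ hT hT0 hn hquiet)
    have h2 := hR.sum_abs_dot_noise_le hE k hq
    have h3 : 3 * (3 * S.noiseScale) ^ 2 * S.weightBudget / S.N *
        (14 / 9 * S.sigman ^ 2 * S.d) = S.noiseScale := by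
      unfold weightBudget; field_simp; norm_num
    have h4 : |dot (S.w n r) (S.x k q) - dot (S.w 0 r) (S.x k q)| ≤ S.noiseScale := by
      rw [← h3]
      exact h1.trans (by gcongr)
    have h5 : |dot (S.w 0 r) (S.x k q)| ≤ 2 * S.noiseScale := by
      obtain ⟨-, -, -, -, -, h6, -⟩ := hE
      refine (h6 r k q hq).trans (le_of_eq ?_)
      unfold noiseScale; ring
    have h6 := abs_sub_abs_le_abs_sub (dot (S.w n r) (S.x k q)) (dot (S.w 0 r) (S.x k q))
    linarith

/-! ### Robustness of the trained network -/

lemma Regular.sum_abs_w_le (hR : S.Regular C) (hdyn : S.ADDyn fT) (hE : S.EventE)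
    (hΓ : C * S.d ≤ Γ) (hT : ∀ i ∈ S.SL, Γ ≤ S.y i * fT i)
    (hT0 : ∀ i ∈ S.SU, S.y i * fT i = 0) (r : Fin S.m) :
    ∑ k ∈ Finset.univ.erase (⟨0, S.hd⟩ : Fin S.d), |S.w S.T r k| ≤ 3 * S.sigma0 * S.d := by
  have hB := hR.noiseScale_pos
  have hσ := S.hsigman
  have hσ0 := S.hsigma0
  have hN : (0 : ℝ) < S.N := by exact_mod_cast S.hN
  have hd : (0 : ℝ) < S.d := by exact_mod_cast S.hd
  have hquiet : ∀ t < S.T, S.Quiet t := fun t ht => hR.quiet hdyn hE hΓ hT hT0 t ht.le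
  set c := 3 * (3 * S.noiseScale) ^ 2 * S.weightBudget / S.N with hc
  have hc0 : 0 ≤ c := by rw [hc]; unfold weightBudget; positivity
  have hcoord : ∀ k ∈ Finset.univ.erase (⟨0, S.hd⟩ : Fin S.d), |S.w S.T r k| ≤
      |S.w 0 r k| + c * ∑ i, ∑ p ∈ Finset.univ.erase (S.sig i), |S.x i p k| := by
    intro k hk
    have hz : dot (e1 S.d S.hd) (Pi.single k 1) = 0 := by
      rw [dot_single]; simp [e1, Finset.ne_of_mem_erase hk]
    have h1 := abs_dot_w_sub_le hdyn S.T r hz (fun t ht i j hj => hquiet t ht r i j hj)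
      (hR.sum_weight_le hdyn hE hΓ hT hT0 le_rfl hquiet)
    simp only [dot_single] at h1
    have h2 := abs_sub_abs_le_abs_sub (S.w S.T r k) (S.w 0 r k)
    linarith
  obtain ⟨hnorm, -, -, hinit, -⟩ := hE
  have h1 : ∑ k, |S.w 0 r k| ≤ 2 * S.sigma0 * S.d := by
    refine (sum_abs_le_sqrt_mul _).trans ?_
    rw [Real.sqrt_mul hd.le]
    calc Real.sqrt S.d * Real.sqrt (sqnorm (S.w 0 r))
        ≤ Real.sqrt S.d * (2 * S.sigma0 * Real.sqrt S.d) := by gcongr; exact hinit r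
      _ = 2 * S.sigma0 * (Real.sqrt S.d * Real.sqrt S.d) := by ring
      _ = _ := by rw [Real.mul_self_sqrt hd.le]
  have h2 : ∀ i, ∀ p ∈ Finset.univ.erase (S.sig i), ∑ k, |S.x i p k| ≤ 2 * S.sigman * S.d := by
    intro i p hp
    refine (sum_abs_le_sqrt_mul _).trans (Real.sqrt_le_iff.2 ⟨by positivity, ?_⟩)
    have h3 := (hnorm i p (Finset.ne_of_mem_erase hp)).2
    have h4 : 0 ≤ S.sigman ^ 2 * (S.d : ℝ) ^ 2 := by positivity
    nlinarith [mul_le_mul_of_nonneg_left h3 hd.le]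
  have h3 : ∑ k, ∑ i, ∑ p ∈ Finset.univ.erase (S.sig i), |S.x i p k| ≤
      S.N * S.P * (2 * S.sigman * S.d) := by
    rw [Finset.sum_comm]
    calc _ = ∑ i, ∑ p ∈ Finset.univ.erase (S.sig i), ∑ k, |S.x i p k| :=
          Finset.sum_congr rfl fun i _ => Finset.sum_comm
      _ ≤ ∑ i, ∑ p ∈ Finset.univ.erase (S.sig i), 2 * S.sigman * S.d :=
          Finset.sum_le_sum fun i _ => Finset.sum_le_sum fun p hp => h2 i p hp
      _ ≤ ∑ i : Fin S.N, ∑ _p : Fin S.P, 2 * S.sigman * S.d :=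
          Finset.sum_le_sum fun i _ => Finset.sum_le_sum_of_subset_of_nonneg
            (Finset.erase_subset _ _) fun _ _ _ => by positivity
      _ = _ := by simp [mul_assoc]
  have h4 : c * (S.N * S.P * (2 * S.sigman * S.d)) ≤ S.sigma0 * S.d := by
    have h5 : c * (S.N * S.P * (2 * S.sigman * S.d)) = 9 / 7 * S.sigma0 * (S.N * S.P *
        Real.sqrt ((S.d : ℝ) * Real.log ((16 : ℝ) * S.N * S.m * S.P / S.delta))) := by
      have h6 : c = 9 / 14 * S.noiseScale / (S.sigman ^ 2 * S.d) := by
        rw [hc]; unfold weightBudget; field_simp; norm_num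
      rw [h6]; unfold noiseScale; field_simp; ring
    rw [h5]
    nlinarith [mul_le_mul_of_nonneg_left hR.drift_le hσ0.le, mul_pos hσ0 hd]
  calc _ ≤ ∑ k ∈ Finset.univ.erase (⟨0, S.hd⟩ : Fin S.d), (|S.w 0 r k| +
        c * ∑ i, ∑ p ∈ Finset.univ.erase (S.sig i), |S.x i p k|) := Finset.sum_le_sum hcoord
    _ ≤ ∑ k, (|S.w 0 r k| + c * ∑ i, ∑ p ∈ Finset.univ.erase (S.sig i), |S.x i p k|) :=
        Finset.sum_le_sum_of_subset_of_nonneg (Finset.erase_subset _ _) fun k _ _ =>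
          add_nonneg (abs_nonneg _) (mul_nonneg hc0 (Finset.sum_nonneg fun _ _ =>
            Finset.sum_nonneg fun _ _ => abs_nonneg _))
    _ = ∑ k, |S.w 0 r k| + c * ∑ k, ∑ i, ∑ p ∈ Finset.univ.erase (S.sig i), |S.x i p k| := by
        rw [Finset.sum_add_distrib, Finset.mul_sum]
    _ ≤ _ := by linarith [mul_le_mul_of_nonneg_left h3 hc0]

lemma cube_add_ge {A e β : ℝ} (hβ : 0 ≤ β) (he : |e| ≤ |A| / 30 + β) :
    A ^ 3 - |A| ^ 3 / 4 - 10 ^ 4 * β ^ 3 ≤ (A + e) ^ 3 := by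
  have hA := abs_nonneg A
  have hexp : |3 * A ^ 2 * e + 3 * A * e ^ 2 + e ^ 3| ≤
      3 * |A| ^ 2 * |e| + 3 * |A| * |e| ^ 2 + |e| ^ 3 := by
    refine (abs_add_three _ _ _).trans (le_of_eq ?_)
    simp [abs_mul]
  have h1 := (abs_le.1 hexp).1
  have h2 : (A + e) ^ 3 = A ^ 3 + (3 * A ^ 2 * e + 3 * A * e ^ 2 + e ^ 3) := by ring
  have hmono : ∀ a b : ℝ, |A| ≤ a → |e| ≤ b →
      3 * |A| ^ 2 * |e| + 3 * |A| * |e| ^ 2 + |e| ^ 3 ≤ 3 * a ^ 2 * b + 3 * a * b ^ 2 + b ^ 3 := by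
    intro a b ha hb
    have : 0 ≤ a := hA.trans ha
    have : 0 ≤ b := (abs_nonneg e).trans hb
    gcongr
  rcases le_total β (|A| / 30) with h | h
  · have h3 := hmono |A| (|A| / 15) le_rfl (by linarith)
    have h4 : 0 ≤ |A| ^ 3 := by positivity
    have h5 : 0 ≤ β ^ 3 := by positivity
    nlinarith
  · have h3 := hmono (30 * β) (2 * β) (by linarith) (by linarith)
    have h5 : 0 ≤ |A| ^ 3 := by positivity
    have h6 : 0 ≤ β ^ 3 := by positivity
    nlinarith

lemma abs_cube_le_of_abs_le {z a b c : ℝ} (ha : 0 ≤ a) (hb : 0 ≤ b) (hc : 0 ≤ c)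
    (hz : |z| ≤ a + b + c) : |z ^ 3| ≤ 9 * (a ^ 3 + b ^ 3 + c ^ 3) := by
  rw [abs_pow]
  refine (pow_le_pow_left₀ (abs_nonneg z) hz 3).trans ?_
  nlinarith [mul_nonneg (add_nonneg ha hb) (sq_nonneg (a - b)),
    mul_nonneg (add_nonneg hb hc) (sq_nonneg (b - c)),
    mul_nonneg (add_nonneg ha hc) (sq_nonneg (a - c)),
    mul_nonneg ha (sq_nonneg (b - c)), mul_nonneg hb (sq_nonneg (a - c)),
    mul_nonneg hc (sq_nonneg (a - b))]

/-- A network with a dominant signal response classifies correctly under perturbations to which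
it responds weakly. -/
lemma netOut_robust {m P d : ℕ} {w : Fin m → Fin d → ℝ} {X Δ : Fin P → Fin d → ℝ} {s : Fin P}
    {A : Fin m → ℝ} {D : Fin m → Fin P → ℝ} {y κ β : ℝ} (hy : y = 1 ∨ y = -1)
    (hs : ∀ r, dot (w r) (X s) = y * A r) (hX : ∀ r, ∀ p ≠ s, |dot (w r) (X p)| ≤ D r p)
    (hD0 : ∀ r p, 0 ≤ D r p) (hκ0 : 0 ≤ κ) (hβ0 : 0 ≤ β)
    (hΔ : ∀ r p, |dot (w r) (Δ p)| ≤ κ * |A r| + β) (hκ : κ ≤ 1 / 30)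
    (hPκ : 9 * P * κ ^ 3 ≤ 1 / 100) (hβ : m * (10 ^ 4 + 9 * P) * β ^ 3 ≤ 1 / 100)
    (hD : ∑ r, ∑ p, D r p ≤ 1 / 10) (hF : 1 ≤ ∑ r, A r ^ 3)
    (hA : ∑ r, |A r| ^ 3 ≤ ∑ r, A r ^ 3 + 1 / 50) :
    0 ≤ y * netOut w (fun p => X p + Δ p) := by
  have hy2 : y * y = 1 := by rcases hy with h | h <;> rw [h] <;> norm_num
  have hyabs : |y| = 1 := by rcases hy with h | h <;> rw [h] <;> norm_num
  have hDcube : ∑ r, ∑ p, D r p ^ 3 ≤ 1 / 1000 := by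
    have hle : ∀ r p, D r p ≤ 1 / 10 := fun r p =>
      (Finset.single_le_sum (f := fun p => D r p) (fun q _ => hD0 r q) (Finset.mem_univ p)).trans
        ((Finset.single_le_sum (f := fun r => ∑ p, D r p)
          (fun q _ => Finset.sum_nonneg fun p _ => hD0 q p) (Finset.mem_univ r)).trans hD)
    have hterm : ∀ r p, D r p ^ 3 ≤ 1 / 100 * D r p := fun r p => by
      have h2 : D r p * D r p ≤ 1 / 10 * (1 / 10) :=
        mul_le_mul (hle r p) (hle r p) (hD0 r p) (by norm_num)
      nlinarith [mul_le_mul_of_nonneg_right h2 (hD0 r p)]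
    calc _ ≤ ∑ r, ∑ p, 1 / 100 * D r p :=
          Finset.sum_le_sum fun r _ => Finset.sum_le_sum fun p _ => hterm r p
      _ = 1 / 100 * ∑ r, ∑ p, D r p := by simp only [Finset.mul_sum]
      _ ≤ _ := by linarith
  have hterm : ∀ r, A r ^ 3 - |A r| ^ 3 / 4 - 10 ^ 4 * β ^ 3 -
      ∑ p, 9 * (D r p ^ 3 + (κ * |A r|) ^ 3 + β ^ 3) ≤
      y * ∑ p, dot (w r) (X p + Δ p) ^ 3 := by
    intro r
    have hκA : 0 ≤ κ * |A r| := by positivity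
    rw [← Finset.add_sum_erase _ (fun p => dot (w r) (X p + Δ p) ^ 3) (Finset.mem_univ s),
      mul_add]
    have hsig : A r ^ 3 - |A r| ^ 3 / 4 - 10 ^ 4 * β ^ 3 ≤ y * dot (w r) (X s + Δ s) ^ 3 := by
      rw [dot_add_right, hs]
      have he : |y * dot (w r) (Δ s)| ≤ |A r| / 30 + β := by
        rw [abs_mul, hyabs, one_mul]
        have := mul_le_mul_of_nonneg_right hκ (abs_nonneg (A r))
        linarith [hΔ r s]
      refine (cube_add_ge hβ0 he).trans (le_of_eq ?_)
      have h3 : A r + y * dot (w r) (Δ s) = y * (y * A r + dot (w r) (Δ s)) := by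
        linear_combination (-A r) * hy2
      rw [h3]
      linear_combination (y * (y * A r + dot (w r) (Δ s)) ^ 3) * hy2
    have hnoise : -∑ p, 9 * (D r p ^ 3 + (κ * |A r|) ^ 3 + β ^ 3) ≤
        y * ∑ p ∈ Finset.univ.erase s, dot (w r) (X p + Δ p) ^ 3 := by
      refine neg_le_of_abs_le ?_
      rw [abs_mul, hyabs, one_mul]
      calc _ ≤ ∑ p ∈ Finset.univ.erase s, |dot (w r) (X p + Δ p) ^ 3| :=
            Finset.abs_sum_le_sum_abs _ _
        _ ≤ ∑ p ∈ Finset.univ.erase s, 9 * (D r p ^ 3 + (κ * |A r|) ^ 3 + β ^ 3) := by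
            refine Finset.sum_le_sum fun p hp =>
              abs_cube_le_of_abs_le (hD0 r p) hκA hβ0 ?_
            rw [dot_add_right]
            refine (abs_add_le _ _).trans ?_
            linarith [hX r p (Finset.ne_of_mem_erase hp), hΔ r p]
        _ ≤ _ := Finset.sum_le_sum_of_subset_of_nonneg (Finset.erase_subset _ _)
            fun p _ _ => by have := hD0 r p; positivity
    linarith
  have hsum := Finset.sum_le_sum fun r (_ : r ∈ Finset.univ) => hterm r
  rw [netOut_eq, Finset.mul_sum]
  refine le_trans ?_ hsum
  have hcalc : ∑ r, (A r ^ 3 - |A r| ^ 3 / 4 - 10 ^ 4 * β ^ 3 -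
      ∑ p, 9 * (D r p ^ 3 + (κ * |A r|) ^ 3 + β ^ 3)) =
      ∑ r, A r ^ 3 - (1 / 4 + 9 * P * κ ^ 3) * ∑ r, |A r| ^ 3 -
        m * (10 ^ 4 + 9 * P) * β ^ 3 - 9 * ∑ r, ∑ p, D r p ^ 3 := by
    simp only [mul_pow, Finset.sum_sub_distrib, Finset.sum_add_distrib, ← Finset.mul_sum,
      Finset.sum_const, Finset.card_univ, Fintype.card_fin, nsmul_eq_mul, ← Finset.sum_div]
    ring
  rw [hcalc]
  have hA0 : 0 ≤ ∑ r, |A r| ^ 3 := Finset.sum_nonneg fun _ _ => by positivity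
  nlinarith [mul_le_mul_of_nonneg_right hPκ hA0]

lemma Regular.le_sum_align (hR : S.Regular C) (hdyn : S.ADDyn fT) (hE : S.EventE)
    (hΓ : C * S.d ≤ Γ) (hT : ∀ i ∈ S.SL, Γ ≤ S.y i * fT i)
    (hT0 : ∀ i ∈ S.SU, S.y i * fT i = 0) {K : ℝ} (hK : 0 ≤ K) (hKC : 5 * Real.exp K ≤ C) :
    K ≤ ∑ r, S.align S.T r ^ 3 := by
  have hp := hR.signalPath hdyn hE hΓ hT le_rfl
    fun t ht => hR.quiet hdyn hE hΓ hT hT0 t ht.le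
  obtain ⟨r, hr⟩ := exists_align_init_ge hE
  have hα := S.halpha
  have hσ := S.hsigma0
  refine hp.le_sum_of_long (c := S.alpha * S.sigma0 / 2) (by positivity) r hr hK ?_
  have := hR.horizon_ge
  have := Real.exp_pos K
  linarith

lemma Regular.sum_abs_align_cube_le (hR : S.Regular C) (hdyn : S.ADDyn fT) (hE : S.EventE)
    (hΓ : C * S.d ≤ Γ) (hT : ∀ i ∈ S.SL, Γ ≤ S.y i * fT i)
    (hT0 : ∀ i ∈ S.SU, S.y i * fT i = 0) :
    ∑ r, |S.align S.T r| ^ 3 ≤ ∑ r, S.align S.T r ^ 3 + 1 / 50 := by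
  have hp := hR.signalPath hdyn hE hΓ hT le_rfl
    fun t ht => hR.quiet hdyn hE hΓ hT hT0 t ht.le
  refine sum_abs_cube_le ?_ hR.alignInit_le (hp.neg_le le_rfl)
  have := S.halpha
  have := S.hsigma0
  unfold alignInit; positivity

lemma Regular.mean_lloss_le (hR : S.Regular C) {K : ℝ} (hK0 : 0 ≤ K) (hq : S.Quiet S.T)
    (hK : K ≤ ∑ r, S.align S.T r ^ 3) :
    1 / (S.N : ℝ) * ∑ i, lloss (S.marg S.T i) ≤ 2 * Real.exp (-(K / 2)) + 2 / C := by
  have hN : (0 : ℝ) < S.N := by exact_mod_cast S.hN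
  have hC := hR.C_ge
  have hsmall : ∀ {z : ℝ}, z ≤ 1 / 25 → Real.exp z ≤ 2 := by
    intro z hz
    have h1 : Real.exp z ≤ Real.exp (1 / 25) := Real.exp_le_exp.2 hz
    have h2 := Real.add_one_le_exp (-(1 / 25) : ℝ)
    rw [Real.exp_neg] at h2
    have h3 : Real.exp (1 / 25) * (Real.exp (1 / 25))⁻¹ = 1 :=
      mul_inv_cancel₀ (Real.exp_pos _).ne'
    nlinarith [Real.exp_pos (1 / 25)]
  have hL : ∀ i ∈ S.SL, lloss (S.marg S.T i) ≤ 2 * Real.exp (-(K / 2)) := by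
    intro i hi
    have h1 := (hR.marg_bounds hq hi (by linarith)).1
    have h2 := le_max_left (∑ r, S.align S.T r ^ 3) 0
    refine (lloss_le_exp_neg _).trans ?_
    have h3 : Real.exp (-(S.marg S.T i)) ≤ Real.exp (1 / 25 + -(K / 2)) :=
      Real.exp_le_exp.2 (by linarith)
    rw [Real.exp_add] at h3
    exact h3.trans (mul_le_mul_of_nonneg_right (hsmall le_rfl) (Real.exp_pos _).le)
  have hU : ∀ i ∈ S.SU, lloss (S.marg S.T i) ≤ 2 := by
    intro i hi
    have h1 := hR.abs_noiseMarg_le hq i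
    rw [← S.marg_of_mem_SU S.T hi] at h1
    refine (lloss_le_exp_neg _).trans (hsmall ?_)
    linarith [(abs_le.1 h1).1, hR.response_le]
  have hsum : ∑ i, lloss (S.marg S.T i) ≤
      S.SL.card * (2 * Real.exp (-(K / 2))) + S.SU.card * 2 := by
    rw [← S.hunion, Finset.sum_union S.hdisj]
    exact add_le_add (by simpa using Finset.sum_le_card_nsmul _ _ _ hL)
      (by simpa using Finset.sum_le_card_nsmul _ _ _ hU)
  have hcard := S.card_SL_add_card_SU
  have hSU : (0 : ℝ) ≤ S.SU.card := by positivity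
  have h1 : (S.SU.card : ℝ) ≤ S.N / C := by
    rw [le_div_iff₀ (by linarith)]
    linarith [hR.card_SU_le]
  have h2 : (S.SL.card : ℝ) * (2 * Real.exp (-(K / 2))) ≤ S.N * (2 * Real.exp (-(K / 2))) :=
    mul_le_mul_of_nonneg_right (by linarith) (by positivity)
  calc _ ≤ 1 / (S.N : ℝ) * (S.N * (2 * Real.exp (-(K / 2))) + S.N / C * 2) := by
        gcongr; linarith
    _ = _ := by field_simp

lemma exists_wsig_ge (hF : 1 ≤ ∑ r, S.align S.T r ^ 3) :
    ∃ r, 1 / (S.alpha * (S.m : ℝ) ^ ((1 : ℝ) / 3)) ≤ S.wsig S.T r := by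
  have hm : (0 : ℝ) < S.m := by exact_mod_cast S.hm
  have hα := S.halpha
  have hμm : ((S.m : ℝ) ^ ((1 : ℝ) / 3)) ^ 3 = S.m := by
    rw [← Real.rpow_natCast, ← Real.rpow_mul hm.le]; norm_num
  obtain ⟨r, hr⟩ := SignalPath.exists_filter_ge _ hμm hF
  refine ⟨r, ?_⟩
  unfold align at hr
  rw [div_le_iff₀ (by positivity)] at hr ⊢
  linarith

/-! ### The robust test error -/

section TestLaw

instance (σ : ℝ) (d : ℕ) (k : Fin d) : IsProbabilityMeasure (noiseCoordLaw σ d k) := by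
  unfold noiseCoordLaw
  split_ifs
  · infer_instance
  · exact instIsProbabilityMeasureGaussianReal 0 _

instance (σ : ℝ) (d : ℕ) : IsProbabilityMeasure (noisePatchLaw σ d) := by
  unfold noisePatchLaw; infer_instance

instance (P : ℕ) (hP : 0 < P) : IsProbabilityMeasure (uniformPatch P hP) := by
  unfold uniformPatch; infer_instance

instance : IsProbabilityMeasure labelLaw := by
  constructor
  simp [labelLaw, ENNReal.inv_two_add_inv_two]

lemma lintegral_abs_gaussianReal_le {σ : ℝ} (hσ : 0 < σ) :
    ∫⁻ x, ENNReal.ofReal |x| ∂(gaussianReal 0 ⟨σ ^ 2, sq_nonneg _⟩) ≤ ENNReal.ofReal σ := by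
  set v : ℝ≥0 := ⟨σ ^ 2, sq_nonneg _⟩
  have hL : MemLp id 2 (gaussianReal 0 v) := memLp_id_gaussianReal 2
  have hvar : ∫ x, x ^ 2 ∂(gaussianReal 0 v) = σ ^ 2 := by
    have h1 := variance_eq_integral (X := id) (μ := gaussianReal 0 v) aemeasurable_id
    rw [variance_id_gaussianReal] at h1
    simp only [id, integral_id_gaussianReal, sub_zero] at h1
    exact h1.symm
  have hintegral : Integrable (fun x : ℝ => x ^ 2) (gaussianReal 0 v) := hL.integrable_sq
  calc _ ≤ ∫⁻ x, ENNReal.ofReal ((x ^ 2 / σ + σ) / 2) ∂(gaussianReal 0 v) := by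
        refine lintegral_mono fun x => ENNReal.ofReal_le_ofReal ?_
        rw [← sq_abs x]
        have h1 : |x| ^ 2 / σ + σ - 2 * |x| = (|x| - σ) ^ 2 / σ := by field_simp; ring
        have h2 : 0 ≤ (|x| - σ) ^ 2 / σ := by positivity
        linarith
    _ = ENNReal.ofReal (∫ x, (x ^ 2 / σ + σ) / 2 ∂(gaussianReal 0 v)) := by
        rw [ofReal_integral_eq_lintegral_ofReal]
        · exact ((hintegral.div_const _).add (integrable_const _)).div_const _
        · exact ae_of_all _ fun x => by positivity
    _ = ENNReal.ofReal σ := by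
        congr 1
        rw [integral_div, integral_add (hintegral.div_const _) (integrable_const _), integral_div, hvar]
        simp
        field_simp
        ring

lemma lintegral_abs_noiseCoordLaw_le {σ : ℝ} (hσ : 0 < σ) {d : ℕ} (hd : 0 < d) (k : Fin d) :
    ∫⁻ x, ENNReal.ofReal |x| ∂(noiseCoordLaw σ d k) ≤
      if k = ⟨0, hd⟩ then 0 else ENNReal.ofReal σ := by
  unfold noiseCoordLaw
  split_ifs with h1 h2 h2
  · simp
  · simp
  · exact absurd (Or.inl (by rw [h2])) h1
  · exact lintegral_abs_gaussianReal_le hσ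

lemma lintegral_abs_coord (σ : ℝ) (P d : ℕ) (p : Fin P) (k : Fin d) :
    ∫⁻ ξ : Fin P → Fin d → ℝ, ENNReal.ofReal |ξ p k|
        ∂(Measure.pi fun _ : Fin P => noisePatchLaw σ d) =
      ∫⁻ x, ENNReal.ofReal |x| ∂(noiseCoordLaw σ d k) := by
  have h1 := measurePreserving_eval (fun _ : Fin P => noisePatchLaw σ d) p
  have h2 : MeasurePreserving (Function.eval k) (noisePatchLaw σ d) (noiseCoordLaw σ d k) :=
    measurePreserving_eval (noiseCoordLaw σ d) k
  rw [← (h2.comp h1).lintegral_comp (f := fun x => ENNReal.ofReal |x|) (by fun_prop)]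
  rfl

/-- Markov bound for the noise response of a test sample. -/
lemma measure_noise_response_le {σ L : ℝ} (hσ : 0 < σ) {m P d : ℕ} (hd : 0 < d)
    {w : Fin m → Fin d → ℝ}
    (hw : ∀ r, ∑ k ∈ Finset.univ.erase (⟨0, hd⟩ : Fin d), |w r k| ≤ L) :
    (Measure.pi fun _ : Fin P => noisePatchLaw σ d)
      {ξ | 1 / 10 < ∑ r, ∑ p, ∑ k, |w r k| * |ξ p k|} ≤
      ENNReal.ofReal (10 * (m * P * (L * σ))) := by
  set μ := Measure.pi fun _ : Fin P => noisePatchLaw σ d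
  set f : (Fin P → Fin d → ℝ) → ℝ := fun ξ => ∑ r, ∑ p, ∑ k, |w r k| * |ξ p k| with hf
  have hintegral : ∫⁻ ξ, ENNReal.ofReal (f ξ) ∂μ ≤ ENNReal.ofReal (m * P * (L * σ)) := by
    have h1 : ∀ ξ, ENNReal.ofReal (f ξ) =
        ∑ r, ∑ p, ∑ k, ENNReal.ofReal |w r k| * ENNReal.ofReal |ξ p k| := by
      intro ξ
      rw [hf, ENNReal.ofReal_sum_of_nonneg fun _ _ => Finset.sum_nonneg fun _ _ =>
        Finset.sum_nonneg fun _ _ => by positivity]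
      refine Finset.sum_congr rfl fun r _ => ?_
      rw [ENNReal.ofReal_sum_of_nonneg fun _ _ => Finset.sum_nonneg fun _ _ => by positivity]
      refine Finset.sum_congr rfl fun p _ => ?_
      rw [ENNReal.ofReal_sum_of_nonneg fun _ _ => by positivity]
      exact Finset.sum_congr rfl fun k _ => ENNReal.ofReal_mul (abs_nonneg _)
    simp only [h1]
    rw [lintegral_finsetSum _ fun r _ => by fun_prop]
    have h2 : ∀ r, ∫⁻ ξ, ∑ p, ∑ k, ENNReal.ofReal |w r k| * ENNReal.ofReal |ξ p k| ∂μ ≤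
        P * ENNReal.ofReal (L * σ) := by
      intro r
      rw [lintegral_finsetSum _ fun p _ => by fun_prop]
      have h3 : ∀ p : Fin P, ∫⁻ ξ, ∑ k, ENNReal.ofReal |w r k| * ENNReal.ofReal |ξ p k| ∂μ ≤
          ENNReal.ofReal (L * σ) := by
        intro p
        rw [lintegral_finsetSum _ fun k _ => by fun_prop]
        calc _ ≤ ∑ k, ENNReal.ofReal |w r k| * (if k = ⟨0, hd⟩ then 0 else ENNReal.ofReal σ) := by
              refine Finset.sum_le_sum fun k _ => ?_
              rw [lintegral_const_mul _ (by fun_prop), lintegral_abs_coord]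
              gcongr
              exact lintegral_abs_noiseCoordLaw_le hσ hd k
          _ = ∑ k ∈ Finset.univ.erase (⟨0, hd⟩ : Fin d), ENNReal.ofReal (|w r k| * σ) := by
              rw [← Finset.add_sum_erase _ _ (Finset.mem_univ (⟨0, hd⟩ : Fin d)), if_pos rfl,
                mul_zero, zero_add]
              refine Finset.sum_congr rfl fun k hk => ?_
              rw [if_neg (Finset.ne_of_mem_erase hk), ENNReal.ofReal_mul (abs_nonneg _)]
          _ ≤ _ := by
              rw [← ENNReal.ofReal_sum_of_nonneg fun _ _ => by positivity, ← Finset.sum_mul]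
              exact ENNReal.ofReal_le_ofReal (mul_le_mul_of_nonneg_right (hw r) hσ.le)
      refine (Finset.sum_le_card_nsmul _ _ _ fun p _ => h3 p).trans (le_of_eq ?_)
      simp
    refine (Finset.sum_le_card_nsmul _ _ _ fun r _ => h2 r).trans (le_of_eq ?_)
    rw [mul_assoc, ENNReal.ofReal_mul (p := (m : ℝ)) (by positivity),
      ENNReal.ofReal_mul (p := (P : ℝ)) (by positivity)]
    simp only [Finset.card_univ, Fintype.card_fin, nsmul_eq_mul, ENNReal.ofReal_natCast]
  have hmeas : Measurable fun ξ => ENNReal.ofReal (f ξ) := by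
    rw [hf]; fun_prop
  calc μ {ξ | 1 / 10 < f ξ} ≤ μ {ξ | ENNReal.ofReal (1 / 10) ≤ ENNReal.ofReal (f ξ)} :=
        measure_mono fun ξ hξ => ENNReal.ofReal_le_ofReal (le_of_lt hξ)
    _ ≤ (∫⁻ ξ, ENNReal.ofReal (f ξ) ∂μ) / ENNReal.ofReal (1 / 10) :=
        meas_ge_le_lintegral_div hmeas.aemeasurable (by simp) ENNReal.ofReal_ne_top
    _ ≤ ENNReal.ofReal (m * P * (L * σ)) / ENNReal.ofReal (1 / 10) := by gcongr
    _ = _ := by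
        rw [← ENNReal.ofReal_div_of_pos (by norm_num)]
        congr 1; ring

lemma continuous_netOut {m P d : ℕ} (w : Fin m → Fin d → ℝ) :
    Continuous fun X : Fin P → Fin d → ℝ => netOut w X := by
  simp only [netOut_eq, dot]
  fun_prop

/-- If the network is robustly correct whenever the noise avoids `B`, its robust test error is at
most the mass of `B`. -/
lemma robErr_le (S : Setting) (t : ℕ) {B : Set (Fin S.P → Fin S.d → ℝ)}
    (hB : ∀ ξ, ξ ∉ B → ∀ (s : Fin S.P) (y : ℝ), y = 1 ∨ y = -1 →
      ∀ Δ : Fin S.P → Fin S.d → ℝ, (∀ p k, |Δ p k| ≤ S.eps) →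
        0 ≤ y * netOut (S.w t)
          (fun p => Function.update ξ s ((S.alpha * y) • e1 S.d S.hd) p + Δ p)) :
    S.robErr t ≤ (Measure.pi fun _ : Fin S.P => noisePatchLaw S.sigman S.d) B := by
  set bad : Set ((Fin S.P → Fin S.d → ℝ) × ℝ) := {Xy |
      ∃ Δ : Fin S.P → Fin S.d → ℝ, (∀ p k, |Δ p k| ≤ S.eps) ∧
        Xy.2 * netOut (S.w t) (fun p => Xy.1 p + Δ p) < 0} with hbad
  have hopen : IsOpen bad := by
    have : bad = ⋃ Δ ∈ {Δ : Fin S.P → Fin S.d → ℝ | ∀ p k, |Δ p k| ≤ S.eps},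
        {Xy | Xy.2 * netOut (S.w t) (fun p => Xy.1 p + Δ p) < 0} := by
      ext Xy; simp [hbad]
    rw [this]
    refine isOpen_biUnion fun Δ _ => isOpen_lt ?_ continuous_const
    exact continuous_snd.mul ((continuous_netOut (S.w t)).comp (by fun_prop))
  have hmap : Measurable fun z : ℝ × Fin S.P × (Fin S.P → Fin S.d → ℝ) =>
      (Function.update z.2.2 z.2.1 ((S.alpha * z.1) • e1 S.d S.hd), z.1) := by
    refine Measurable.prodMk ?_ measurable_fst
    refine measurable_pi_lambda _ fun p => ?_
    simp only [Function.update_apply]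
    refine Measurable.ite ?_ (by fun_prop) (by fun_prop)
    exact (measurable_fst.comp measurable_snd) (measurableSet_singleton p) |> fun h => by
      convert h using 1
      ext z; simp [eq_comm]
  unfold robErr testLaw
  rw [Measure.map_apply hmap hopen.measurableSet]
  refine (measure_mono (t := ({1, -1}ᶜ : Set ℝ) ×ˢ Set.univ ∪ Set.univ ×ˢ (Set.univ ×ˢ B))
    ?_).trans ((measure_union_le _ _).trans ?_)
  · rintro ⟨y, s, ξ⟩ ⟨Δ, hΔ, hlt⟩
    by_contra hcon
    simp only [Set.mem_union, Set.mem_prod, Set.mem_compl_iff, Set.mem_insert_iff,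
      Set.mem_singleton_iff, Set.mem_univ, and_true, true_and] at hcon
    exact absurd hlt (not_lt.2 (hB ξ (by tauto) s y (by tauto) Δ hΔ))
  · rw [Measure.prod_prod, Measure.prod_prod, Measure.prod_prod]
    have h0 : labelLaw ({1, -1}ᶜ : Set ℝ) = 0 := by
      have : MeasurableSet ({1, -1}ᶜ : Set ℝ) := by measurability
      simp [labelLaw, this]
    rw [h0]
    simp

end TestLaw

lemma Regular.robErr_le (hR : S.Regular C) (hdyn : S.ADDyn fT) (hE : S.EventE)
    (hΓ : C * S.d ≤ Γ) (hT : ∀ i ∈ S.SL, Γ ≤ S.y i * fT i)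
    (hT0 : ∀ i ∈ S.SU, S.y i * fT i = 0) (hF : 1 ≤ ∑ r, S.align S.T r ^ 3) :
    S.robErr S.T ≤ ENNReal.ofReal (60 / C) := by
  have hσ := S.hsigman
  have hσ0 := S.hsigma0
  have hα := S.halpha
  have hε := S.heps
  have hC := hR.C_ge
  have hC0 : 0 < C := by linarith
  have hm : (1 : ℝ) ≤ S.m := by exact_mod_cast S.hm
  have hw := fun r => hR.sum_abs_w_le hdyn hE hΓ hT hT0 r
  have hmark := measure_noise_response_le (P := S.P) hσ S.hd hw
  refine (Setting.robErr_le S S.T ?_).trans (hmark.trans (ENNReal.ofReal_le_ofReal ?_))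
  · intro ξ hξ s y hy Δ hΔ
    simp only [Set.mem_ofPred_eq, not_lt] at hξ
    set β := S.eps * (3 * S.sigma0 * S.d) with hβ
    have hβ0 : 0 ≤ β := by positivity
    have hmβ : C * (S.m * β) ≤ 3 := hR.eps_sigma0_le
    have hP := hR.patches_le
    have hdotabs : ∀ (r : Fin S.m) (z : Fin S.d → ℝ),
        |dot (S.w S.T r) z| ≤ ∑ k, |S.w S.T r k| * |z k| := fun r z => by
      unfold dot
      exact (Finset.abs_sum_le_sum_abs _ _).trans
        (le_of_eq (Finset.sum_congr rfl fun k _ => abs_mul _ _))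
    refine netOut_robust (s := s) (A := S.align S.T)
      (D := fun r p => ∑ k, |S.w S.T r k| * |ξ p k|) (κ := 1 / C) (β := β) hy
      ?_ ?_ ?_ (by positivity) hβ0 ?_ ?_ ?_ ?_ hξ hF
      (hR.sum_abs_align_cube_le hdyn hE hΓ hT hT0)
    · intro r
      rw [Function.update_self, dot_smul_right, dot_e1]
      unfold align wsig; ring
    · intro r p hp
      rw [Function.update_of_ne hp]
      exact hdotabs r _
    · intro r p
      exact Finset.sum_nonneg fun _ _ => by positivity
    · intro r p
      have h1 : |dot (S.w S.T r) (Δ p)| ≤ S.eps * ∑ k, |S.w S.T r k| := by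
        refine (hdotabs r _).trans ?_
        rw [Finset.mul_sum]
        refine Finset.sum_le_sum fun k _ => ?_
        rw [mul_comm]
        exact mul_le_mul_of_nonneg_right (hΔ p k) (abs_nonneg _)
      rw [← Finset.add_sum_erase _ _ (Finset.mem_univ (⟨0, S.hd⟩ : Fin S.d)), mul_add] at h1
      have h2 := mul_le_mul_of_nonneg_left (hw r) hε.le
      have h3 : S.eps * |S.w S.T r ⟨0, S.hd⟩| ≤ 1 / C * |S.align S.T r| := by
        unfold align wsig
        rw [abs_mul, abs_of_pos hα, ← mul_assoc]
        refine mul_le_mul_of_nonneg_right ?_ (abs_nonneg _)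
        rw [one_div_mul_eq_div, le_div_iff₀ hC0]
        linarith [hR.eps_le]
      linarith
    · rw [div_le_div_iff₀ hC0 (by norm_num)]; linarith
    · have h1 : 9 * (S.P : ℝ) * (1 / C) ^ 3 ≤ 9 * C * (1 / C) ^ 3 := by gcongr
      have h2 : 9 * C * (1 / C) ^ 3 = 9 / C ^ 2 := by field_simp
      rw [h2] at h1
      refine h1.trans ?_
      rw [div_le_div_iff₀ (by positivity) (by norm_num)]
      nlinarith
    · have h1 : C * β ≤ 3 := by nlinarith [mul_nonneg hC0.le hβ0]
      have h2 : β ≤ 1 / 1000 := by nlinarith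
      have h3 : (10 ^ 4 + 9 * (S.P : ℝ)) ≤ 10 * C := by linarith
      calc (S.m : ℝ) * (10 ^ 4 + 9 * S.P) * β ^ 3
          = (S.m * β) * (10 ^ 4 + 9 * S.P) * β ^ 2 := by ring
        _ ≤ (S.m * β) * (10 * C) * (1 / 1000) ^ 2 := by gcongr
        _ = C * (S.m * β) / 10 ^ 5 := by ring
        _ ≤ _ := by linarith
  · rw [le_div_iff₀ hC0]
    linarith [hR.test_le]

/-! ### From the parameter constraints to the quantitative bounds -/

/-- The parameter constraints with all denominators cleared, in terms of two logarithmic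
factors. -/
structure Cleared (S : Setting) (C L L' : ℝ) : Prop where
  C_ge : 10 ^ 6 ≤ C
  one_le_log : 1 ≤ L
  log_le : L ≤ L'
  sigma0_noise : C * (S.sigma0 * S.sigman * Real.sqrt S.d *
    ((S.m : ℝ) ^ ((2 : ℝ) / 3) * (S.P : ℝ) ^ ((2 : ℝ) / 3))) * L' ≤ 1
  sigma0_signal : C * (S.alpha * S.sigma0 * (S.m : ℝ) ^ ((2 : ℝ) / 3)) * L' ≤ 1
  sigma0_test : C * (S.sigma0 * S.sigman * S.m ^ 2 * Real.sqrt S.P * S.d) * L' ≤ 1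
  rate : C * (S.eta * S.alpha ^ 2) * L ≤ 1
  horizon : C * S.N ≤ S.T * (S.eta * S.sigma0 * S.sigman ^ 3 * (S.d * Real.sqrt S.d))
  dim : C * S.m ^ 2 * S.P ^ 2 * S.N ^ 2 * L ^ 4 ≤ S.d
  signal : C ^ 3 * L ^ 3 * (S.sigman ^ 3 * (S.d * Real.sqrt S.d)) ≤ S.alpha ^ 3 * S.N
  T_ge : C ≤ S.T
  T_le : (S.T : ℝ) ≤ Real.exp L
  one_le_log_noise : 1 ≤ Real.log ((16 : ℝ) * S.N * S.m * S.P / S.delta)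
  log_noise_le : Real.log ((16 : ℝ) * S.N * S.m * S.P / S.delta) ≤ L
  log_cross_le : Real.log ((16 : ℝ) * S.N ^ 2 * S.P ^ 2 / S.delta) ≤ 2 * L
  log_init_le : Real.log ((16 : ℝ) * S.m / S.delta) ≤ L
  card_SU_le : C * S.SU.card ≤ S.N
  eps_le : C * S.eps ≤ S.alpha
  eps_sigma0_le : C * (S.eps * (S.m * S.sigma0 * S.d)) ≤ 1
  patches_le : (S.P : ℝ) ≤ C
  width_ge : C ≤ 2 * S.m

/-- A bound by a minimum of reciprocals, with denominators cleared. -/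
lemma mul_le_one_of_le_inv_mul_div {C L a b c : ℝ} (hC : 0 < C) (hL : 0 < L) (hc : 0 < c)
    (h : a ≤ C⁻¹ * b / L) (hb : b ≤ 1 / c) : C * (a * c) * L ≤ 1 := by
  have h1 : a ≤ C⁻¹ * (1 / c) / L := h.trans (by gcongr)
  calc C * (a * c) * L ≤ C * (C⁻¹ * (1 / c) / L * c) * L := by gcongr
    _ = 1 := by field_simp

lemma cube_rpow_two_thirds {x : ℝ} (hx : 0 ≤ x) : (x ^ ((2 : ℝ) / 3)) ^ 3 = x ^ 2 := by
  rw [← Real.rpow_natCast, ← Real.rpow_mul hx, ← Real.rpow_natCast]; norm_num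

lemma cube_rpow_one_third {x : ℝ} (hx : 0 ≤ x) : (x ^ ((1 : ℝ) / 3)) ^ 3 = x := by
  rw [← Real.rpow_natCast, ← Real.rpow_mul hx]; norm_num

/-- A positive number bounded by `b / L` with `0 ≤ b` forces `0 < L`. -/
lemma pos_of_pos_le_div {a b L : ℝ} (ha : 0 < a) (hb : 0 ≤ b) (h : a ≤ b / L) : 0 < L := by
  by_contra! hL
  exact absurd h (not_le.2 ((div_nonpos_of_nonneg_of_nonpos hb hL).trans_lt ha))

set_option maxHeartbeats 800000 in
lemma CondH.cleared (hC : 10 ^ 6 ≤ C) (hH : S.CondH C) (hSp : S.SparseRegime C) :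
    S.Cleared C (Real.log ((S.T : ℝ) * S.N * S.m * S.P / S.delta))
      (Real.log ((S.T : ℝ) * S.d * S.N * S.m * S.P / S.delta)) := by
  obtain ⟨-, hhor, hdim, hsig, hσ0, hη, -, heps, hwid, -, hP2, hPC⟩ := hH
  obtain ⟨-, hpun, hNlog⟩ := hSp
  set L := Real.log ((S.T : ℝ) * S.N * S.m * S.P / S.delta) with hL
  set L' := Real.log ((S.T : ℝ) * S.d * S.N * S.m * S.P / S.delta) with hL'
  have hα := S.halpha
  have hσ := S.hsigman
  have hs := S.hsigma0
  have heta := S.heta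
  have hδ := S.hdelta0
  have hδ1 := S.hdelta1
  have hC0 : 0 < C := by linarith
  have hN : (1 : ℝ) ≤ S.N := by exact_mod_cast S.hN
  have hm : (1 : ℝ) ≤ S.m := by exact_mod_cast S.hm
  have hP : (2 : ℝ) ≤ S.P := by exact_mod_cast hP2
  have hd : (1 : ℝ) ≤ S.d := by exact_mod_cast S.hd
  have hP0 : (0 : ℝ) < S.P := by linarith
  have hm0 : (0 : ℝ) < S.m := by linarith
  have hN0 : (0 : ℝ) < S.N := by linarith
  have hd0 : (0 : ℝ) < S.d := by linarith
  have hL'0 : 0 < L' := pos_of_pos_le_div hs (by positivity) hσ0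
  have hL0 : 0 < L := pos_of_pos_le_div heta (by positivity) hη
  have hT1 : (1 : ℝ) ≤ S.T := by
    have : S.T ≠ 0 := by
      intro h0
      rw [hL, h0] at hL0
      simp at hL0
    exact_mod_cast Nat.one_le_iff_ne_zero.2 this
  have hT0 : (0 : ℝ) < S.T := by linarith
  set E := (S.N : ℝ) * S.m * S.P / S.delta with hE
  have hE2 : 2 ≤ E := by
    rw [hE, le_div_iff₀ hδ]
    have h1 : (1 : ℝ) ≤ S.N * S.m := one_le_mul_of_one_le_of_one_le hN hm
    linarith [le_mul_of_one_le_left hP0.le h1]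
  have hTE : (S.T : ℝ) * S.N * S.m * S.P / S.delta = S.T * E := by rw [hE]; ring
  have hLE : L = Real.log (S.T * E) := by rw [hL, hTE]
  have hL'E : L' = Real.log (S.d * (S.T * E)) := by rw [hL', hE]; congr 1; ring
  have hE0 : 0 < E := by linarith
  have hETE : E ≤ S.T * E := le_mul_of_one_le_left hE0.le hT1
  have hTE1 : 1 ≤ S.T * E := by linarith
  have hlog_split : L' = Real.log S.d + L := by
    rw [hL'E, hLE, Real.log_mul hd0.ne' (by linarith)]
  have hlogd : 0 ≤ Real.log S.d := Real.log_nonneg hd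
  have hLL' : L ≤ L' := by linarith
  have hlog2 : 1 / 2 ≤ Real.log 2 := by linarith [Real.log_two_gt_d9]
  have hLhalf : 1 / 2 ≤ L := by
    rw [hLE]
    exact hlog2.trans (Real.log_le_log (by norm_num) (by linarith))
  have hsqd : 1 ≤ Real.sqrt S.d := Real.one_le_sqrt.2 hd
  have hsqP : 1 ≤ Real.sqrt S.P := Real.one_le_sqrt.2 (by linarith)
  have hnoise := mul_le_one_of_le_inv_mul_div hC0 hL'0
    (show 0 < (S.m : ℝ) ^ ((2 : ℝ) / 3) * (S.P : ℝ) ^ ((2 : ℝ) / 3) *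
      S.sigman * Real.sqrt S.d by positivity) hσ0 ((min_le_left _ _).trans (min_le_left _ _))
  have hsignal := mul_le_one_of_le_inv_mul_div hC0 hL'0
    (show 0 < S.alpha * (S.m : ℝ) ^ ((2 : ℝ) / 3) by positivity) hσ0
    ((min_le_left _ _).trans (min_le_right _ _))
  have htest := mul_le_one_of_le_inv_mul_div hC0 hL'0
    (show 0 < S.sigman * S.m ^ 2 * Real.sqrt S.P * S.d by positivity) hσ0 (min_le_right _ _)
  have hrate1 := mul_le_one_of_le_inv_mul_div hC0 hL0
    (show 0 < S.sigman ^ 2 * S.d by positivity) hη ((min_le_left _ _).trans (min_le_right _ _))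
  have hrate2 := mul_le_one_of_le_inv_mul_div hC0 hL0
    (show 0 < S.alpha ^ 2 by positivity) hη (min_le_right _ _)
  have hhor' : C * S.N ≤ S.T * (S.eta * S.sigma0 * S.sigman ^ 3 * (S.d * Real.sqrt S.d)) :=
    (div_le_iff₀ (by positivity)).1 hhor
  have hTC : C ≤ S.T := by
    have h1 : C * (S.sigma0 * S.sigman * S.d) * (1 / 2) ≤ 1 := by
      refine le_trans ?_ htest
      have h2 : S.sigma0 * S.sigman * S.d ≤
          S.sigma0 * (S.sigman * S.m ^ 2 * Real.sqrt S.P * S.d) := by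
        have h3 : (1 : ℝ) ≤ S.m ^ 2 * Real.sqrt S.P :=
          one_le_mul_of_one_le_of_one_le (one_le_pow₀ hm) hsqP
        calc S.sigma0 * S.sigman * S.d = S.sigma0 * S.sigman * S.d * 1 := by ring
          _ ≤ S.sigma0 * S.sigman * S.d * (S.m ^ 2 * Real.sqrt S.P) := by gcongr
          _ = _ := by ring
      have : (1 : ℝ) / 2 ≤ L' := by linarith
      gcongr
    have h2 : C * (S.eta * (S.sigman ^ 2 * S.d)) * (1 / 2) ≤ 1 :=
      le_trans (by gcongr) hrate1
    have h3 : S.eta * S.sigma0 * S.sigman ^ 3 * (S.d * Real.sqrt S.d) ≤ 1 := by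
      have h4 : Real.sqrt S.d ≤ S.d := Real.sqrt_le_iff.2 ⟨hd0.le, le_self_pow₀ hd two_ne_zero⟩
      have h5 : S.sigma0 * S.sigman * S.d ≤ 1 := by
        have h6 : 0 < S.sigma0 * S.sigman * S.d := by positivity
        linarith [mul_le_mul_of_nonneg_right hC h6.le]
      have h6 : S.eta * (S.sigman ^ 2 * S.d) ≤ 1 := by
        have h7 : 0 < S.eta * (S.sigman ^ 2 * S.d) := by positivity
        linarith [mul_le_mul_of_nonneg_right hC h7.le]
      calc _ ≤ S.eta * S.sigma0 * S.sigman ^ 3 * (S.d * S.d) := by gcongr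
        _ = (S.sigma0 * S.sigman * S.d) * (S.eta * (S.sigman ^ 2 * S.d)) := by ring
        _ ≤ 1 := mul_le_one₀ h5 (by positivity) h6
    calc C ≤ C * S.N := le_mul_of_one_le_right hC0.le hN
      _ ≤ S.T * 1 := hhor'.trans (mul_le_mul_of_nonneg_left h3 hT0.le)
      _ = S.T := mul_one _
  have hTE16 : 16 * E ≤ S.T * E := mul_le_mul_of_nonneg_right (by linarith) hE0.le
  have hlog16 : 1 ≤ Real.log 16 := by
    rw [show (16 : ℝ) = 2 ^ 4 by norm_num, Real.log_pow]
    push_cast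
    linarith
  have hE16 : (16 : ℝ) * S.N * S.m * S.P / S.delta = 16 * E := by rw [hE]; ring
  have hone : 1 ≤ Real.log (16 * E) :=
    hlog16.trans (Real.log_le_log (by norm_num) (by linarith))
  have hnoise_le : Real.log (16 * E) ≤ L := by
    rw [hLE]; exact Real.log_le_log (by positivity) hTE16
  have hlogd_le : Real.log S.d ≤ L' := by linarith
  have hSU : (S.SU.card : ℝ) ≤ C⁻¹ * Real.log S.d := by
    unfold pun at hpun
    exact (div_le_div_iff_of_pos_right hN0).1 hpun
  have hNd : C * Real.log S.d ≤ S.N := by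
    refine le_trans ?_ hNlog
    have h1 : (1 : ℝ) ≤ S.m * S.P := one_le_mul_of_one_le_of_one_le hm (by linarith)
    calc C * Real.log S.d ≤ C * 1 * L' := by rw [mul_one]; gcongr
      _ ≤ C * (S.m * S.P) * L' := by gcongr
      _ = _ := by ring
  have hSUlog : C * S.SU.card ≤ Real.log S.d := by
    have := mul_le_mul_of_nonneg_left hSU hC0.le
    rwa [mul_inv_cancel_left₀ hC0.ne'] at this
  have hSUN : C * S.SU.card ≤ S.N := hSUlog.trans
    ((le_mul_of_one_le_left hlogd (by linarith)).trans hNd)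
  have hpun1 : S.pun < 1 := by
    unfold pun
    rw [div_lt_one hN0]
    have h1 : (0 : ℝ) ≤ S.SU.card := by positivity
    linarith [mul_le_mul_of_nonneg_right hC h1]
  have hpun0 : 0 ≤ S.pun := by unfold pun; positivity
  have hbase : 0 < (S.N : ℝ) * (1 - S.pun) := mul_pos hN0 (by linarith)
  refine ⟨hC, hone.trans hnoise_le, hLL', le_trans (le_of_eq (by ring)) hnoise,
    le_trans (le_of_eq (by ring)) hsignal, le_trans (le_of_eq (by ring)) htest, hrate2, hhor',
    hdim, ?_, hTC, ?_, hE16 ▸ hone, hE16 ▸ hnoise_le, ?_, ?_, hSUN, ?_, ?_, hPC, ?_⟩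
  · rw [div_le_iff₀ (by positivity)] at hsig
    have h1 := pow_le_pow_left₀ (by positivity) hsig 3
    rw [mul_pow S.alpha, cube_rpow_one_third hbase.le] at h1
    have h2 : Real.sqrt S.d ^ 3 = S.d * Real.sqrt S.d := by
      rw [pow_succ, Real.sq_sqrt hd0.le]
    calc C ^ 3 * L ^ 3 * (S.sigman ^ 3 * (S.d * Real.sqrt S.d))
        = (C * S.sigman * Real.sqrt S.d * L) ^ 3 := by rw [← h2]; ring
      _ ≤ S.alpha ^ 3 * (S.N * (1 - S.pun)) := h1
      _ ≤ S.alpha ^ 3 * S.N := by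
          gcongr
          exact mul_le_of_le_one_right hN0.le (by linarith)
  · rw [hLE, Real.exp_log (by linarith)]
    exact (le_mul_of_one_le_right hT0.le (by linarith))
  · have h1 : 2 * L = Real.log ((S.T * E) ^ 2) := by rw [hLE, Real.log_pow]; norm_num
    rw [h1]
    refine Real.log_le_log (by positivity) ?_
    have h2 : (S.T * E) ^ 2 = (S.T ^ 2 * S.m ^ 2 / S.delta) * (S.N ^ 2 * S.P ^ 2 / S.delta) := by
      rw [hE]; field_simp
    have h3 : (16 : ℝ) * S.N ^ 2 * S.P ^ 2 / S.delta = 16 * (S.N ^ 2 * S.P ^ 2 / S.delta) := by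
      ring
    rw [h2, h3]
    refine mul_le_mul_of_nonneg_right ?_ (by positivity)
    rw [le_div_iff₀ hδ]
    have h4 : (1 : ℝ) ≤ S.m ^ 2 := one_le_pow₀ hm
    have h5 : (16 : ℝ) ≤ S.T ^ 2 :=
      (show (16 : ℝ) ≤ S.T by linarith).trans (le_self_pow₀ hT1 two_ne_zero)
    have h6 := le_mul_of_one_le_right (sq_nonneg (S.T : ℝ)) h4
    linarith
  · rw [hLE]
    refine Real.log_le_log (by positivity) ?_
    rw [← hTE]
    refine div_le_div_of_nonneg_right ?_ hδ.le
    have h1 : (1 : ℝ) ≤ S.N * S.P := one_le_mul_of_one_le_of_one_le hN (by linarith)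
    calc (16 : ℝ) * S.m = 16 * 1 * S.m := by ring
      _ ≤ S.T * (S.N * S.P) * S.m := by gcongr; linarith
      _ = _ := by ring
  · have h1 := heps.le.trans (mul_le_mul_of_nonneg_left (min_le_left _ _) (by positivity))
    rw [inv_mul_eq_div, le_div_iff₀ hC0] at h1
    linarith
  · have h1 := heps.le.trans (mul_le_mul_of_nonneg_left (min_le_right _ _) (by positivity))
    rw [inv_mul_eq_div, le_div_iff₀ hC0, le_div_iff₀ (by positivity)] at h1
    linarith
  · have h1 : Real.log 2 ≤ Real.log ((S.N : ℝ) * S.P / S.delta) := by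
      refine Real.log_le_log (by norm_num) ?_
      rw [le_div_iff₀ hδ]
      linarith [le_mul_of_one_le_left hP0.le hN]
    linarith [mul_le_mul_of_nonneg_left (hlog2.trans h1) hC0.le]

namespace Cleared

variable {L L' : ℝ}

lemma sqrt_log_noise_le (h : S.Cleared C L L') :
    Real.sqrt ((S.d : ℝ) * Real.log ((16 : ℝ) * S.N * S.m * S.P / S.delta)) ≤
      Real.sqrt S.d * L := by
  rw [Real.sqrt_mul (by positivity)]
  gcongr
  refine Real.sqrt_le_iff.2 ⟨by linarith [h.one_le_log], ?_⟩
  exact h.log_noise_le.trans (le_self_pow₀ h.one_le_log two_ne_zero)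

lemma noiseScale_pos (h : S.Cleared C L L') : 0 < S.noiseScale := by
  have h1 := h.one_le_log_noise
  have h2 := S.hsigma0
  have h3 := S.hsigman
  have h4 : (0 : ℝ) < S.d := by exact_mod_cast S.hd
  unfold noiseScale
  positivity

lemma response_le (h : S.Cleared C L L') :
    27 * S.m * S.P * S.noiseScale ^ 3 ≤ 1 / 100 := by
  have hm : (1 : ℝ) ≤ S.m := by exact_mod_cast S.hm
  have hP : (1 : ℝ) ≤ S.P := by exact_mod_cast S.hP
  have hC := h.C_ge
  have hB := h.noiseScale_pos
  have hσ := S.hsigman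
  have hs := S.hsigma0
  set ν := (S.m : ℝ) ^ ((2 : ℝ) / 3) * (S.P : ℝ) ^ ((2 : ℝ) / 3) with hν
  have hν0 : 0 < ν := by positivity
  have hν3 : ν ^ 3 = (S.m * S.P) ^ 2 := by
    rw [hν, mul_pow, cube_rpow_two_thirds (by linarith), cube_rpow_two_thirds (by linarith),
      mul_pow]
  have hBν : C * (S.noiseScale * ν) ≤ 1 := by
    refine le_trans ?_ h.sigma0_noise
    calc C * (S.noiseScale * ν)
        ≤ C * (S.sigma0 * S.sigman * (Real.sqrt S.d * L') * ν) := by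
          unfold noiseScale
          have h1 : Real.sqrt S.d * L ≤ Real.sqrt S.d * L' := by gcongr; exact h.log_le
          have h2 := h.sqrt_log_noise_le.trans h1
          gcongr
      _ = _ := by ring
  have hsmall : S.noiseScale * ν ≤ 1 / 100 := by
    linarith [mul_le_mul_of_nonneg_right hC (show 0 ≤ S.noiseScale * ν by positivity)]
  have hmP : (S.m : ℝ) * S.P ≤ (S.m * S.P) ^ 2 :=
    le_self_pow₀ (one_le_mul_of_one_le_of_one_le hm hP) two_ne_zero
  calc 27 * S.m * S.P * S.noiseScale ^ 3 = 27 * (S.m * S.P) * S.noiseScale ^ 3 := by ring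
    _ ≤ 27 * (S.m * S.P) ^ 2 * S.noiseScale ^ 3 := by gcongr
    _ = 27 * (S.noiseScale * ν) ^ 3 := by rw [mul_pow S.noiseScale, hν3]; ring
    _ ≤ 27 * (1 / 100) ^ 3 := by gcongr
    _ ≤ _ := by norm_num

lemma alignInit_le (h : S.Cleared C L L') : S.m * S.alignInit ^ 3 ≤ 1 / 100 := by
  have hm : (1 : ℝ) ≤ S.m := by exact_mod_cast S.hm
  have hC := h.C_ge
  have hL := h.one_le_log
  have hα := S.halpha
  have hs := S.hsigma0
  set ρ := (S.m : ℝ) ^ ((2 : ℝ) / 3) with hρ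
  have hρ0 : 0 < ρ := by positivity
  have hρ3 : ρ ^ 3 = (S.m : ℝ) ^ 2 := cube_rpow_two_thirds (by linarith)
  have hsq : Real.sqrt (2 * Real.log ((16 : ℝ) * S.m / S.delta)) ≤ 2 * L' := by
    refine Real.sqrt_le_iff.2 ⟨by linarith [h.log_le], ?_⟩
    have h1 := le_self_pow₀ (hL.trans h.log_le) two_ne_zero
    rw [mul_pow]
    linarith [h.log_init_le, h.log_le]
  have ha0 : 0 ≤ S.alignInit := by unfold alignInit; positivity
  have haρ : C * (S.alignInit * ρ) ≤ 2 := by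
    calc C * (S.alignInit * ρ) ≤ C * (S.alpha * (S.sigma0 * (2 * L')) * ρ) := by
          unfold alignInit; gcongr
      _ = 2 * (C * (S.alpha * S.sigma0 * ρ) * L') := by ring
      _ ≤ 2 := by linarith [h.sigma0_signal]
  have hsmall : S.alignInit * ρ ≤ 1 / 10 := by
    linarith [mul_le_mul_of_nonneg_right hC (show 0 ≤ S.alignInit * ρ by positivity)]
  calc S.m * S.alignInit ^ 3 ≤ S.m ^ 2 * S.alignInit ^ 3 := by
        gcongr
        exact le_self_pow₀ hm two_ne_zero
    _ = (S.alignInit * ρ) ^ 3 := by rw [mul_pow, hρ3]; ring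
    _ ≤ (1 / 10) ^ 3 := by gcongr
    _ ≤ _ := by norm_num

lemma mul_sqrt_le (h : S.Cleared C L L') {z : ℝ} (hz : z ≤ 2 * L) :
    S.N * S.P * Real.sqrt ((S.d : ℝ) * z) ≤ S.d / 40 := by
  have hm : (1 : ℝ) ≤ S.m := by exact_mod_cast S.hm
  have hL := h.one_le_log
  have hC := h.C_ge
  have hd : (0 : ℝ) < S.d := by exact_mod_cast S.hd
  have h1 : (S.N * S.P : ℝ) ^ 2 * (2 * L) * 1600 ≤ S.d := by
    refine le_trans ?_ h.dim
    calc (S.N * S.P : ℝ) ^ 2 * (2 * L) * 1600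
        ≤ (S.N * S.P : ℝ) ^ 2 * (2 * L ^ 4) * 1600 := by
          gcongr
          exact le_self_pow₀ hL (by norm_num)
      _ = 3200 * 1 * S.P ^ 2 * S.N ^ 2 * L ^ 4 := by ring
      _ ≤ _ := by
          gcongr
          · linarith
          · exact one_le_pow₀ hm
  have h2 : Real.sqrt ((S.d : ℝ) * z) ≤ Real.sqrt ((S.d : ℝ) * (2 * L)) := by gcongr
  have h3 : S.N * S.P * Real.sqrt ((S.d : ℝ) * (2 * L)) ≤ S.d / 40 := by
    refine le_of_sq_le_sq ?_ (by positivity)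
    rw [mul_pow, Real.sq_sqrt (by positivity)]
    have := mul_le_mul_of_nonneg_left h1 hd.le
    linarith
  exact le_trans (by gcongr) h3

lemma unlearn_budget (h : S.Cleared C L L') (hT : (S.T : ℝ) ≤ S.Tmax) :
    S.T * (S.eta * (27 / 2 * S.m * S.P * S.noiseScale ^ 3)) ≤ S.weightBudget := by
  have hB := h.noiseScale_pos
  have hσ := S.hsigman
  have hs := S.hsigma0
  have hη := S.heta
  have hℓ := h.one_le_log_noise
  have hd : (0 : ℝ) < S.d := by exact_mod_cast S.hd
  have hm : (0 : ℝ) < S.m := by exact_mod_cast S.hm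
  have hP : (0 : ℝ) < S.P := by exact_mod_cast S.hP
  set ℓ := Real.log ((16 : ℝ) * S.N * S.m * S.P / S.delta) with hℓdef
  have hB4 : S.noiseScale ^ 4 = S.sigma0 ^ 4 * S.sigman ^ 4 * (S.d * ℓ) ^ 2 := by
    unfold noiseScale
    rw [← hℓdef, mul_pow, mul_pow, show (4 : ℕ) = 2 * 2 from rfl, pow_mul (Real.sqrt _),
      Real.sq_sqrt (by positivity)]
  unfold Tmax at hT
  rw [← hℓdef, le_div_iff₀ (by positivity)] at hT
  unfold weightBudget
  rw [le_div_iff₀ (by positivity)]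
  calc S.T * (S.eta * (27 / 2 * S.m * S.P * S.noiseScale ^ 3)) *
        (42 * S.noiseScale * S.sigman ^ 2 * S.d)
      = 567 * (S.T * S.eta * S.m * S.P * S.noiseScale ^ 4 * S.sigman ^ 2 * S.d) := by ring
    _ ≤ 1000 * (S.T * S.eta * S.m * S.P * S.noiseScale ^ 4 * S.sigman ^ 2 * S.d) := by
        gcongr; norm_num
    _ = S.T * (1000 * S.eta * S.m * S.P * S.sigma0 ^ 4 * S.sigman ^ 6 * (S.d : ℝ) ^ 3 *
        ℓ ^ 2) := by rw [hB4]; ring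
    _ ≤ S.N := hT

lemma horizon_ge (h : S.Cleared C L L') :
    C ≤ S.eta * S.alpha ^ 2 * S.T * (S.alpha * S.sigma0) := by
  have hη := S.heta
  have hs := S.hsigma0
  have hσ := S.hsigman
  have hC := h.C_ge
  have hN : (0 : ℝ) < S.N := by exact_mod_cast S.hN
  have hCL : 1 ≤ C ^ 3 * L ^ 3 :=
    one_le_mul_of_one_le_of_one_le (one_le_pow₀ (by linarith)) (one_le_pow₀ h.one_le_log)
  refine le_of_mul_le_mul_right ?_ hN
  set g := S.sigman ^ 3 * ((S.d : ℝ) * Real.sqrt S.d)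
  calc C * S.N ≤ S.T * (S.eta * S.sigma0 * S.sigman ^ 3 * (S.d * Real.sqrt S.d)) := h.horizon
    _ = S.T * S.eta * S.sigma0 * (1 * g) := by ring
    _ ≤ S.T * S.eta * S.sigma0 * (C ^ 3 * L ^ 3 * g) := by gcongr
    _ ≤ S.T * S.eta * S.sigma0 * (S.alpha ^ 3 * S.N) :=
        mul_le_mul_of_nonneg_left h.signal (by positivity)
    _ = _ := by ring

lemma rate_le (h : S.Cleared C L L') : C * (S.eta * S.alpha ^ 2) ≤ 1 := by
  have hη := S.heta
  have hα := S.halpha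
  have hC := h.C_ge
  exact (le_mul_of_one_le_right (by positivity) h.one_le_log).trans h.rate

lemma teacher_ge (h : S.Cleared C L L') :
    12 * (2 + 600 * (S.eta * S.alpha ^ 2) * S.T) ^ 2 ≤ Real.exp (C * S.d) := by
  have hη := S.heta
  have hα := S.halpha
  have hC := h.C_ge
  have hT := hC.trans h.T_ge
  have hL := h.one_le_log
  have hN : (1 : ℝ) ≤ S.N := by exact_mod_cast S.hN
  have hm : (1 : ℝ) ≤ S.m := by exact_mod_cast S.hm
  have hP : (1 : ℝ) ≤ S.P := by exact_mod_cast S.hP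
  have hrate : S.eta * S.alpha ^ 2 ≤ 1 := by
    have h1 : 0 < S.eta * S.alpha ^ 2 := by positivity
    linarith [mul_le_mul_of_nonneg_right hC h1.le, h.rate_le]
  have h1 : 2 + 600 * (S.eta * S.alpha ^ 2) * S.T ≤ 1000 * S.T := by
    have : S.eta * S.alpha ^ 2 * S.T ≤ 1 * S.T := by gcongr
    linarith
  have hLd : 4 * L ≤ C * S.d := by
    have hm2 : (1 : ℝ) ≤ S.m ^ 2 := one_le_pow₀ hm
    have hP2 : (1 : ℝ) ≤ S.P ^ 2 := one_le_pow₀ hP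
    have hN2 : (1 : ℝ) ≤ S.N ^ 2 := one_le_pow₀ hN
    have h2 : L ≤ S.d := by
      refine le_trans ?_ h.dim
      calc L ≤ L ^ 4 := le_self_pow₀ hL (by norm_num)
        _ = 1 * 1 * 1 * 1 * L ^ 4 := by ring
        _ ≤ _ := by gcongr; linarith
    have h3 : 4 * (S.d : ℝ) ≤ C * S.d := by gcongr; linarith
    linarith
  calc 12 * (2 + 600 * (S.eta * S.alpha ^ 2) * S.T) ^ 2 ≤ 12 * (1000 * S.T) ^ 2 := by gcongr
    _ = 12 * 10 ^ 6 * (S.T : ℝ) ^ 2 := by ring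
    _ ≤ (S.T : ℝ) ^ 2 * (S.T : ℝ) ^ 2 := by
        gcongr
        have := pow_le_pow_left₀ (by norm_num) hT 2
        linarith
    _ = (S.T : ℝ) ^ 4 := by ring
    _ ≤ Real.exp L ^ 4 := by gcongr; exact h.T_le
    _ = Real.exp (4 * L) := by rw [← Real.exp_nat_mul]; norm_num
    _ ≤ _ := Real.exp_le_exp.2 hLd

lemma test_le (h : S.Cleared C L L') :
    C * (S.m * S.P * (3 * S.sigma0 * S.d * S.sigman)) ≤ 6 := by
  have hC := h.C_ge
  have hs := S.hsigma0
  have hσ := S.hsigman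
  have hm : (0 : ℝ) < S.m := by exact_mod_cast S.hm
  have hP : (1 : ℝ) ≤ S.P := by exact_mod_cast S.hP
  have hsq : Real.sqrt S.P ≤ 2 * S.m :=
    (Real.sqrt_le_iff.2 ⟨by linarith, le_self_pow₀ hP two_ne_zero⟩).trans
      (h.patches_le.trans h.width_ge)
  have hL' : 1 ≤ L' := h.one_le_log.trans h.log_le
  set g := C * (S.sigma0 * S.sigman * S.m ^ 2 * Real.sqrt S.P * S.d)
  have hg : g ≤ 1 := (le_mul_of_one_le_right (by positivity) hL').trans h.sigma0_test
  have hPP : (S.P : ℝ) = Real.sqrt S.P * Real.sqrt S.P := (Real.mul_self_sqrt (by linarith)).symm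
  refine le_of_mul_le_mul_right ?_ hm
  calc C * (S.m * S.P * (3 * S.sigma0 * S.d * S.sigman)) * S.m
      = 3 * g * Real.sqrt S.P := by rw [hPP, Real.sqrt_mul_self (Real.sqrt_nonneg _)]; ring
    _ ≤ 3 * 1 * (2 * S.m) := by gcongr
    _ = 6 * S.m := by ring

/-- The arithmetic behind the gradient-weight budget of a learnable sample. -/
lemma budget_of_pow_le {Z q L V μ : ℝ} (hq : 0 < q) (hL : 1 ≤ L)
    (hZ : 10 ^ 6 * L ^ 3 ≤ Z) (hμq : μ ^ 2 * q ≤ 1) (hV8 : V ^ 8 ≤ Z ^ 2 / q ^ 4) :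
    10 / q + 5 * V * μ ≤ Z / (42 * q * L) := by
  have hZ0 : 0 < Z := lt_of_lt_of_le (by positivity) hZ
  have hL3 : L ≤ L ^ 3 := le_self_pow₀ hL (by norm_num)
  have hL23 : L ^ 2 ≤ L ^ 3 := pow_le_pow_right₀ hL (by norm_num)
  have hZ1 : 1 ≤ Z := by linarith
  have hV4 : V ^ 4 ≤ Z / q ^ 2 := by
    refine le_of_sq_le_sq ?_ (by positivity)
    rw [div_pow, ← pow_mul, ← pow_mul]
    exact hV8
  have hV2 : V ^ 2 * q ≤ Z := by
    refine le_of_sq_le_sq ?_ hZ0.le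
    rw [le_div_iff₀ (by positivity)] at hV4
    calc (V ^ 2 * q) ^ 2 = V ^ 4 * q ^ 2 := by ring
      _ ≤ Z := hV4
      _ ≤ Z ^ 2 := le_self_pow₀ hZ1 two_ne_zero
  have hVμ : 420 * (V * μ * q * L) ≤ Z := by
    refine le_of_sq_le_sq ?_ hZ0.le
    calc (420 * (V * μ * q * L)) ^ 2 = 176400 * L ^ 2 * (V ^ 2 * q) * (μ ^ 2 * q) := by ring
      _ ≤ 176400 * L ^ 2 * Z * 1 := by gcongr
      _ ≤ Z * Z * 1 := by
          gcongr
          linarith [sq_nonneg L]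
      _ = Z ^ 2 := by ring
  rw [le_div_iff₀ (by positivity)]
  calc (10 / q + 5 * V * μ) * (42 * q * L) = 420 * L + 420 * (V * μ * q * L) / 2 := by
        field_simp; ring
    _ ≤ Z := by linarith

lemma learn_budget (h : S.Cleared C L L') (hT : (S.T : ℝ) ≤ S.Tmax) {V : ℝ}
    (hV8 : V ^ 8 ≤ 2 + 600 * (S.eta * S.alpha ^ 2) * S.T) :
    10 / (S.alpha * S.sigma0) + 5 * V * (S.m : ℝ) ^ ((1 : ℝ) / 3) ≤
      S.alpha ^ 2 * S.weightBudget := by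
  have hσ := S.hsigman
  have hs := S.hsigma0
  have hα := S.halpha
  have hη := S.heta
  have hC := h.C_ge
  have hL := h.one_le_log
  have hB := h.noiseScale_pos
  have hℓ := h.one_le_log_noise
  have hd : (0 : ℝ) < S.d := by exact_mod_cast S.hd
  have hN : (1 : ℝ) ≤ S.N := by exact_mod_cast S.hN
  have hm : (1 : ℝ) ≤ S.m := by exact_mod_cast S.hm
  have hP : (1 : ℝ) ≤ S.P := by exact_mod_cast S.hP
  have hsd : 0 < Real.sqrt S.d := Real.sqrt_pos.2 hd
  have hsd2 : Real.sqrt S.d ^ 2 = S.d := Real.sq_sqrt hd.le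
  set g := S.sigman ^ 3 * ((S.d : ℝ) * Real.sqrt S.d) with hg
  have hg0 : 0 < g := by positivity
  have hg2 : g ^ 2 = S.sigman ^ 6 * (S.d : ℝ) ^ 3 := by
    rw [hg, mul_pow, mul_pow, hsd2]; ring
  set Z := S.alpha ^ 3 * S.N / g with hZdef
  set q := S.alpha * S.sigma0 with hqdef
  have hq : 0 < q := by positivity
  have hρ : ((S.m : ℝ) ^ ((1 : ℝ) / 3)) ^ 2 = (S.m : ℝ) ^ ((2 : ℝ) / 3) := by
    rw [← Real.rpow_natCast, ← Real.rpow_mul (by linarith)]; norm_num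
  have hρ1 : 1 ≤ (S.m : ℝ) ^ ((2 : ℝ) / 3) := Real.one_le_rpow hm (by norm_num)
  have hμq : ((S.m : ℝ) ^ ((1 : ℝ) / 3)) ^ 2 * q ≤ 1 := by
    rw [hρ, mul_comm]
    refine le_trans ?_ h.sigma0_signal
    calc q * (S.m : ℝ) ^ ((2 : ℝ) / 3) = 1 * (q * (S.m : ℝ) ^ ((2 : ℝ) / 3)) * 1 := by ring
      _ ≤ _ := by
          gcongr
          · linarith
          · exact hL.trans h.log_le
  have hq1 : q ≤ 1 := by
    refine le_trans ?_ hμq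
    rw [hρ]
    exact le_mul_of_one_le_left hq.le hρ1
  have hZ : 10 ^ 6 * L ^ 3 ≤ Z := by
    rw [hZdef, le_div_iff₀ hg0]
    refine le_trans ?_ h.signal
    gcongr
    exact hC.trans (le_self_pow₀ (by linarith) (by norm_num))
  have hZ6 : 10 ^ 6 ≤ Z := by
    linarith [one_le_pow₀ hL (n := 3)]
  have hZq : Z ^ 2 / q ^ 4 = S.alpha ^ 2 * S.N ^ 2 / (S.sigma0 ^ 4 * g ^ 2) := by
    rw [hZdef, hqdef]; field_simp
  have htwo : 2 ≤ 2 / 5 * (Z ^ 2 / q ^ 4) := by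
    have h1 : 5 ≤ Z ^ 2 / q ^ 4 := by
      rw [le_div_iff₀ (by positivity)]
      have h2 : q ^ 4 ≤ 1 := pow_le_one₀ hq.le hq1
      have h3 : Z ≤ Z ^ 2 := le_self_pow₀ (by linarith) two_ne_zero
      linarith
    linarith
  have hTZ : 600 * (S.eta * S.alpha ^ 2) * S.T ≤ 3 / 5 * (Z ^ 2 / q ^ 4) := by
    unfold Tmax at hT
    rw [le_div_iff₀ (by positivity)] at hT
    rw [hZq, mul_div_assoc', le_div_iff₀ (by positivity), hg2]
    calc 600 * (S.eta * S.alpha ^ 2) * S.T * (S.sigma0 ^ 4 * (S.sigman ^ 6 * (S.d : ℝ) ^ 3))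
        = 3 / 5 * S.alpha ^ 2 * (S.T * (1000 * S.eta * 1 * 1 * S.sigma0 ^ 4 * S.sigman ^ 6 *
            (S.d : ℝ) ^ 3 * 1 ^ 2)) := by ring
      _ ≤ 3 / 5 * S.alpha ^ 2 * (S.T * (1000 * S.eta * S.m * S.P * S.sigma0 ^ 4 *
            S.sigman ^ 6 * (S.d : ℝ) ^ 3 *
              Real.log ((16 : ℝ) * S.N * S.m * S.P / S.delta) ^ 2)) := by gcongr
      _ ≤ 3 / 5 * S.alpha ^ 2 * S.N := by gcongr
      _ ≤ 3 / 5 * S.alpha ^ 2 * S.N ^ 2 := by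
          gcongr
          exact le_self_pow₀ hN two_ne_zero
      _ = 3 / 5 * (S.alpha ^ 2 * S.N ^ 2) := by ring
  refine (budget_of_pow_le hq hL hZ hμq (by linarith)).trans ?_
  unfold weightBudget
  rw [hZdef, hqdef, mul_div_assoc', div_div, div_le_div_iff₀ (by positivity) (by positivity)]
  calc S.alpha ^ 3 * S.N * (42 * S.noiseScale * S.sigman ^ 2 * S.d)
      ≤ S.alpha ^ 3 * S.N * (42 * (S.sigma0 * S.sigman * (Real.sqrt S.d * L)) *
          S.sigman ^ 2 * S.d) := by
        have hsl := h.sqrt_log_noise_le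
        unfold noiseScale
        gcongr
    _ = S.alpha ^ 2 * S.N * (g * (42 * (S.alpha * S.sigma0) * L)) := by rw [hg]; ring

lemma regular (h : S.Cleared C L L') (hT : (S.T : ℝ) ≤ S.Tmax) : S.Regular C where
  C_ge := h.C_ge
  noiseScale_pos := h.noiseScale_pos
  card_SU_le := h.card_SU_le
  eps_le := h.eps_le
  rate_le := h.rate_le
  response_le := h.response_le
  alignInit_le := h.alignInit_le
  cross_le := h.mul_sqrt_le h.log_cross_le
  drift_le := by
    have h1 := h.mul_sqrt_le (z := Real.log ((16 : ℝ) * S.N * S.m * S.P / S.delta))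
      (by linarith [h.log_noise_le, h.one_le_log])
    have h2 : (0 : ℝ) ≤ S.d := by positivity
    linarith
  learn_budget := fun _ _ hV8 => h.learn_budget hT hV8
  unlearn_budget := h.unlearn_budget hT
  horizon_ge := h.horizon_ge
  teacher_ge := h.teacher_ge
  eps_sigma0_le := by linarith [h.eps_sigma0_le]
  patches_le := h.patches_le
  test_le := h.test_le

end Cleared

end Setting

/-- Adversarial distillation under a Good Teacher. On the event `E`,
under Condition (H) in the sparse-unlearnable regime with teacher margin `Γ ≥ C d` on
learnable samples and zero margin on unlearnable samples (a Good Teacher), for any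
horizon `T` with `T₀ + m^{2/3} log T_max/(η α²) ≤ T ≤ T_max`: (1) some filter aligns
with the learnable feature; (2) every noise response remains at initialization scale;
(3) the robust training error is `o(1)`; (4) the robust test error on the learnable
test distribution is `o(1)`. -/
theorem stmt19 :
    ∃ C0 : ℝ, 0 < C0 ∧
      ∀ θ : ℝ, 0 < θ →
        ∃ C : ℝ, 0 < C ∧
          ∀ (S : Setting) (fT : Fin S.N → ℝ) (Γ : ℝ),
            S.ADDyn fT → S.EventE → S.CondH C → S.SparseRegime C →
            C * S.d ≤ Γ →
            (∀ i ∈ S.SL, Γ ≤ S.y i * fT i) →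
            (∀ i ∈ S.SU, S.y i * fT i = 0) →
            (S.T0 C0 : ℝ) + (S.m : ℝ) ^ ((2 : ℝ) / 3) * Real.log S.Tmax /
                (S.eta * S.alpha ^ 2) ≤ (S.T : ℝ) →
            (S.T : ℝ) ≤ S.Tmax →
            (∃ r, C0 / (S.alpha * (S.m : ℝ) ^ ((1 : ℝ) / 3)) ≤ S.wsig S.T r) ∧
            (∀ (r : Fin S.m) (i : Fin S.N) (j : Fin S.P), j ≠ S.sig i →
              |dot (S.w S.T r) (S.x i j)| ≤
                4 * S.sigma0 * S.sigman *
                  Real.sqrt ((S.d : ℝ) * Real.log ((16 : ℝ) * S.N * S.m * S.P / S.delta))) ∧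
            1 / (S.N : ℝ) * ∑ i, lloss (S.marg S.T i) ≤ θ ∧
            S.robErr S.T ≤ ENNReal.ofReal θ := by
  refine ⟨1, one_pos, fun θ hθ => ?_⟩
  set K : ℝ := max 2 (2 * Real.log (4 / θ)) with hK
  have hK2 : 2 ≤ K := le_max_left _ _
  have hKθ : 2 * Real.exp (-(K / 2)) ≤ θ / 2 := by
    have h1 : Real.exp (-(K / 2)) ≤ Real.exp (-Real.log (4 / θ)) := by
      refine Real.exp_le_exp.2 ?_
      linarith [le_max_right 2 (2 * Real.log (4 / θ))]
    rw [Real.exp_neg (Real.log _), Real.exp_log (by positivity), inv_div] at h1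
    linarith
  set C : ℝ := 10 ^ 6 + 5 * Real.exp K + 60 / θ with hCdef
  have hexp := Real.exp_pos K
  have h60 : 0 < 60 / θ := by positivity
  have hC6 : 10 ^ 6 ≤ C := by linarith
  have hC0 : 0 < C := by linarith
  have h60C : 60 / C ≤ θ := by
    rw [div_le_comm₀ hC0 hθ]
    linarith
  refine ⟨C, hC0, fun S fT Γ hdyn hE hH hSp hΓ hT hT0 _ hTmax => ?_⟩
  have hR := (hH.cleared hC6 hSp).regular hTmax
  have hq := hR.quiet hdyn hE hΓ hT hT0 S.T le_rfl
  have hF := hR.le_sum_align hdyn hE hΓ hT hT0 (K := K) (by linarith) (by linarith)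
  refine ⟨Setting.exists_wsig_ge (by linarith), fun r i j hj => ?_, ?_, ?_⟩
  · refine (hq r i j hj).trans ?_
    have hB := hR.noiseScale_pos
    unfold Setting.noiseScale at hB ⊢
    linarith
  · refine (hR.mean_lloss_le (by linarith) hq hF).trans ?_
    have : 2 / C = 60 / C / 30 := by ring
    linarith
  · exact (hR.robErr_le hdyn hE hΓ hT hT0 (by linarith)).trans (ENNReal.ofReal_le_ofReal h60C)

end AD

end
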